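/- arXiv:1609.08067 — 10 statements merged into one kernel-verified Lean document; each statement's English description precedes it below -/
import Mathlib

section
/- Let G(V,E) and G'(V,E') be two directed graphs on the vertex set [n] which differ in exactly one edge e, where e is a shortcut of the larger graph. Then d_G = d_{G'}, i.e., w_G(x) = w_{G'}(x) for all x ∈ F_q^n. -/
/-- The closure of a set of vertices `X` in the directed graph with edge relation `E`. -/
def gclosure {n : ℕ} (E : Fin n → Fin n → Prop) (X : Set (Fin n)) : Set (Fin n) :=
  {v | ∃ u ∈ X, Relation.ReflTransGen E u v}

/-- The `G`-weight of a word `x`. -/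
noncomputable def gweight {n : ℕ} {F : Type*} [Field F] (E : Fin n → Fin n → Prop)
    (x : Fin n → F) : ℕ :=
  (gclosure E {i | x i ≠ 0}).ncard

/-- `(u,v)` is a shortcut of the graph `E` if there is a simple directed path
(all vertices distinct) from `u` to `v` with at least two edges. -/
def IsShortcut {n : ℕ} (E : Fin n → Fin n → Prop) (u v : Fin n) : Prop :=
  ∃ (k : ℕ) (w : Fin (k + 1) → Fin n), 2 ≤ k ∧ w 0 = u ∧ w (Fin.last k) = v ∧
    Function.Injective w ∧ ∀ i : Fin k, E (w i.castSucc) (w i.succ)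

/-!
A simple path from `a` to `b` with at least two edges never traverses the edge `(a, b)`: doing so
would visit `a` first and `b` immediately after, hence be the whole path. Such a path therefore
survives the deletion of `(a, b)`, and replacing each use of `(a, b)` by it shows that the deletion
does not change reachability, on which the weight depends alone.
-/

section Reachability

variable {α : Type*} {r s : α → α → Prop}

theorem reflTransGen_eq_of_le_of_le_reflTransGen (hrs : r ≤ s) (hsr : s ≤ Relation.ReflTransGen r) :
    Relation.ReflTransGen r = Relation.ReflTransGen s :=
  le_antisymm (Relation.ReflTransGen.mono hrs) (Relation.reflTransGen_closed hsr)

theorem reflTransGen_zero_last {k : ℕ} {w : Fin (k + 1) → α}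
    (hw : ∀ i : Fin k, r (w i.castSucc) (w i.succ)) :
    Relation.ReflTransGen r (w 0) (w (Fin.last k)) := by
  suffices ∀ i, Relation.ReflTransGen r (w 0) (w i) from this (Fin.last k)
  intro i
  induction i using Fin.induction with
  | zero => exact .refl
  | succ i ih => exact ih.tail (hw i)

theorem apply_succ_ne_apply_last {k : ℕ} (hk : k ≠ 1) {w : Fin (k + 1) → α}
    (hinj : Function.Injective w) {i : Fin k} (hi : w i.castSucc = w 0) :
    w i.succ ≠ w (Fin.last k) := by
  intro hlast
  have hi_zero : (i : ℕ) = 0 := congrArg Fin.val (hinj hi)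
  have hi_succ : (i : ℕ) + 1 = k := congrArg Fin.val (hinj hlast)
  omega

end Reachability

section ShortcutDeletion

variable {n : ℕ} {E E' : Fin n → Fin n → Prop} {a b : Fin n}

theorem IsShortcut.reflTransGen_of_forall_or (hsc : IsShortcut E' a b)
    (hE' : ∀ u v, E' u v → E u v ∨ (u = a ∧ v = b)) : Relation.ReflTransGen E a b := by
  obtain ⟨k, w, hk, rfl, rfl, hinj, hpath⟩ := hsc
  refine reflTransGen_zero_last fun i ↦ (hE' _ _ (hpath i)).resolve_right ?_
  rintro ⟨hstart, hfinish⟩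
  exact apply_succ_ne_apply_last (by omega) hinj hstart hfinish

theorem IsShortcut.reflTransGen_eq (hsc : IsShortcut E' a b)
    (hEE' : ∀ u v, E' u v ↔ E u v ∨ (u = a ∧ v = b)) :
    Relation.ReflTransGen E = Relation.ReflTransGen E' := by
  have hdetour : Relation.ReflTransGen E a b :=
    hsc.reflTransGen_of_forall_or fun u v ↦ (hEE' u v).mp
  have hle : E ≤ E' := fun u v h ↦ (hEE' u v).mpr (.inl h)
  refine reflTransGen_eq_of_le_of_le_reflTransGen hle fun u v h ↦ ?_
  rcases (hEE' u v).mp h with hE | ⟨rfl, rfl⟩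
  · exact .single hE
  · exact hdetour

theorem gweight_congr {F : Type*} [Field F]
    (h : Relation.ReflTransGen E = Relation.ReflTransGen E') (x : Fin n → F) :
    gweight E x = gweight E' x := by
  simp only [gweight, gclosure, h]

end ShortcutDeletion

theorem stmt_1_general {n : ℕ} {F : Type*} [Field F] (E E' : Fin n → Fin n → Prop) (a b : Fin n)
    (hEE' : ∀ u v, E' u v ↔ E u v ∨ (u = a ∧ v = b)) (hsc : IsShortcut E' a b) (x : Fin n → F) :
    gweight E x = gweight E' x :=
  gweight_congr (hsc.reflTransGen_eq hEE') x

/-- if the directed graphs `E` and `E'` differ in exactly one edge `(a,b)`,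
which is a shortcut of the larger graph `E'`, then `d_G = d_{G'}`, i.e. the `G`-weights
of all words coincide. -/
theorem stmt_1 {n : ℕ} (hn : 1 ≤ n) {F : Type*} [Field F] [Fintype F]
    (E E' : Fin n → Fin n → Prop) (hE : Irreflexive E) (hE' : Irreflexive E')
    (a b : Fin n) (hab : ¬ E a b)
    (hEE' : ∀ u v, E' u v ↔ E u v ∨ (u = a ∧ v = b))
    (hsc : IsShortcut E' a b) :
    ∀ x : Fin n → F, gweight E x = gweight E' x :=
  stmt_1_general E E' a b hEE' hsc
end

section
/- Let G_1(V,E_1) and G_2(V,E_2) be two directed graphs on the vertex set [n] such that d_{G_1} = d_{G_2} (equivalently, w_{G_1}(x) = w_{G_2}(x) for all x ∈ F_q^n). Then for all vertices u, v ∈ [n], v ∈ ⟨u⟩_{G_1} if and only if v ∈ ⟨u⟩_{G_2}. -/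
/-!
The word with value `1` on `X` and `0` elsewhere has weight `|⟨X⟩_G|`, so if `d_{G₁} ≤ d_{G₂}` then
`|⟨X⟩_{G₁}| ≤ |⟨X⟩_{G₂}|` for every `X`. A set `Y` closed in `G₂` is then closed in `G₁`, because
`Y ⊆ ⟨Y⟩_{G₁}` and `|⟨Y⟩_{G₁}| ≤ |⟨Y⟩_{G₂}| = |Y|`. Since `⟨X⟩_{G₂}` is closed in `G₁` and contains
`X`, it contains `⟨X⟩_{G₁}`.
-/

theorem closureOperator_apply_le_of_strictMono {α β : Type*} [PartialOrder α] [Preorder β]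
    {f : α → β} (hf : StrictMono f) {c₁ c₂ : ClosureOperator α}
    (h : ∀ x, f (c₁ x) ≤ f (c₂ x)) (x : α) : c₁ x ≤ c₂ x := by
  have not_lt : ¬c₂ x < c₁ (c₂ x) := fun hlt =>
    (hf hlt).not_ge <| by simpa only [c₂.idempotent] using h (c₂ x)
  have closed : c₁.IsClosed (c₂ x) :=
    c₁.isClosed_iff.2 (eq_of_le_of_not_lt (c₁.le_closure _) not_lt).symm
  exact ClosureOperator.closure_min (c₂.le_closure x) closed

/-- The closure `X ↦ ⟨X⟩_G` under domination, bundled as a closure operator on sets of vertices so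
that closures in two graphs can be compared order-theoretically. -/
def gclosureOperator {n : ℕ} (E : Fin n → Fin n → Prop) : ClosureOperator (Set (Fin n)) :=
  ClosureOperator.mk' (gclosure E)
    (fun _ _ hXY _ ⟨u, hu, huv⟩ => ⟨u, hXY hu, huv⟩)
    (fun _ u hu => ⟨u, hu, .refl⟩)
    (fun _ _ ⟨_, ⟨u, hu, huv⟩, hvw⟩ => ⟨u, hu, huv.trans hvw⟩)

theorem gweight_indicator_one {n : ℕ} (F : Type*) [Field F] (E : Fin n → Fin n → Prop)
    (X : Set (Fin n)) : gweight E (X.indicator (1 : Fin n → F)) = (gclosure E X).ncard := by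
  have support_eq : {i | X.indicator (1 : Fin n → F) i ≠ 0} = X := by
    ext i
    simp
  rw [gweight, support_eq]

theorem stmt_3_general {n : ℕ} {F : Type*} [Field F] {E₁ E₂ : Fin n → Fin n → Prop}
    (h : ∀ x : Fin n → F, gweight E₁ x ≤ gweight E₂ x) (X : Set (Fin n)) :
    gclosure E₁ X ⊆ gclosure E₂ X := by
  have ncard_le (Y : Set (Fin n)) : (gclosure E₁ Y).ncard ≤ (gclosure E₂ Y).ncard := by
    simpa only [gweight_indicator_one] using h (Y.indicator 1)
  exact closureOperator_apply_le_of_strictMono (c₁ := gclosureOperator E₁)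
    (c₂ := gclosureOperator E₂) Set.ncard_strictMono ncard_le X

/-- if two directed graphs on `[n]` induce the same metric on `F_q^n`,
then for all vertices `u, v`, `v ∈ ⟨u⟩_{G₁}` iff `v ∈ ⟨u⟩_{G₂}`. -/
theorem stmt_3 {n : ℕ} (hn : 1 ≤ n) {F : Type*} [Field F] [Fintype F]
    (E₁ E₂ : Fin n → Fin n → Prop) (hE₁ : Irreflexive E₁) (hE₂ : Irreflexive E₂)
    (h : ∀ x : Fin n → F, gweight E₁ x = gweight E₂ x) :
    ∀ u v : Fin n, v ∈ gclosure E₁ {u} ↔ v ∈ gclosure E₂ {u} :=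
  fun u _ => ⟨(stmt_3_general (fun x => (h x).le) {u} ·),
    (stmt_3_general (fun x => (h x).ge) {u} ·)⟩
end

section
/- Let G_1 and G_2 be two directed graphs on the vertex set [n]. If |⟨{i}⟩_{G_1}| = |⟨{i}⟩_{G_2}| for every i ∈ [n] and |⟨{i,j}⟩_{G_1}| = |⟨{i,j}⟩_{G_2}| for every pair i ≠ j in [n], then |⟨A⟩_{G_1}| = |⟨A⟩_{G_2}| for every subset A ⊆ [n]; in other words, the G-weights of all words with Hamming weight one or two determine the whole metric. -/
/-!
The closure of `{i}` is contained in that of `{i, j}`, with equality exactly when `j` is reachable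
from `i`. If the closure of `{i}` is finite, equality of the two sets can be read off from their
cardinalities, so the cardinalities on singletons and pairs determine reachability, and hence all
closures.
-/

open Relation

section ReachableSet

variable {α : Type*} {E : α → α → Prop} {X Y : Set α} {i j : α}

/-- The closure of a set of vertices `X` in a directed graph on an arbitrary vertex type, given by
its edge relation `E`. On `Fin n` it unfolds to `gclosure`. -/
def reachableSet (E : α → α → Prop) (X : Set α) : Set α :=
  {v | ∃ u ∈ X, ReflTransGen E u v}

theorem mem_reachableSet_singleton : j ∈ reachableSet E {i} ↔ ReflTransGen E i j := by
  simp [reachableSet]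

theorem subset_reachableSet : X ⊆ reachableSet E X :=
  fun u hu => ⟨u, hu, .refl⟩

theorem reachableSet_subset_reachableSet_iff :
    reachableSet E X ⊆ reachableSet E Y ↔ X ⊆ reachableSet E Y := by
  refine ⟨subset_reachableSet.trans, ?_⟩
  rintro hXY v ⟨u, hu, huv⟩
  obtain ⟨w, hw, hwu⟩ := hXY hu
  exact ⟨w, hw, hwu.trans huv⟩

theorem reachableSet_mono (hXY : X ⊆ Y) : reachableSet E X ⊆ reachableSet E Y :=
  reachableSet_subset_reachableSet_iff.2 (hXY.trans subset_reachableSet)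

theorem reachableSet_pair_subset_singleton_iff :
    reachableSet E {i, j} ⊆ reachableSet E {i} ↔ ReflTransGen E i j := by
  simp only [reachableSet_subset_reachableSet_iff, Set.insert_subset_iff,
    Set.singleton_subset_iff, mem_reachableSet_singleton, ReflTransGen.refl, true_and]

theorem reflTransGen_iff_encard_reachableSet_pair_eq (hfin : (reachableSet E {i}).Finite) :
    ReflTransGen E i j ↔ (reachableSet E {i, j}).encard = (reachableSet E {i}).encard := by
  have hsub : reachableSet E {i} ⊆ reachableSet E {i, j} := reachableSet_mono (by simp)
  rw [← reachableSet_pair_subset_singleton_iff]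
  refine ⟨fun h => congrArg Set.encard (h.antisymm hsub), fun h => ?_⟩
  exact (hfin.eq_of_subset_of_encard_le hsub h.le).ge

end ReachableSet

theorem stmt_6_general {α : Type*} (E₁ E₂ : α → α → Prop)
    (hfin : ∀ i, (reachableSet E₁ {i}).Finite)
    (hsingle : ∀ i, (reachableSet E₁ {i}).encard = (reachableSet E₂ {i}).encard)
    (hpair : ∀ i j, i ≠ j → (reachableSet E₁ {i, j}).encard = (reachableSet E₂ {i, j}).encard)
    (A : Set α) : reachableSet E₁ A = reachableSet E₂ A := by
  have hfin₂ (i : α) : (reachableSet E₂ {i}).Finite := by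
    rw [← Set.encard_lt_top_iff, ← hsingle i]
    exact (hfin i).encard_lt_top
  have reach_iff (i j : α) : ReflTransGen E₁ i j ↔ ReflTransGen E₂ i j := by
    obtain rfl | hij := eq_or_ne i j
    · exact iff_of_true .refl .refl
    · rw [reflTransGen_iff_encard_reachableSet_pair_eq (hfin i),
        reflTransGen_iff_encard_reachableSet_pair_eq (hfin₂ i), hsingle i, hpair i j hij]
  simp only [reachableSet, reach_iff]

/-- if two directed graphs on `[n]` have closures of the same cardinality
on all singletons and all pairs, then all their closures have the same cardinality;
i.e. the `G`-weights of the words of Hamming weight one or two determine the whole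
metric. -/
theorem stmt_6 {n : ℕ} (hn : 1 ≤ n)
    (E₁ E₂ : Fin n → Fin n → Prop) (hE₁ : Irreflexive E₁) (hE₂ : Irreflexive E₂)
    (hsingle : ∀ i : Fin n, (gclosure E₁ {i}).ncard = (gclosure E₂ {i}).ncard)
    (hpair : ∀ i j : Fin n, i ≠ j →
      (gclosure E₁ {i, j}).ncard = (gclosure E₂ {i, j}).ncard) :
    ∀ A : Set (Fin n), (gclosure E₁ A).ncard = (gclosure E₂ A).ncard := by
  simp only [← Nat.cast_inj (R := ℕ∞), (Set.toFinite _).cast_ncard_eq] at hsingle hpair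
  exact fun A => congrArg Set.ncard (stmt_6_general E₁ E₂ (fun _ => Set.toFinite _) hsingle hpair A)
end

section
/- Let G_1 and G_2 be two directed graphs on the vertex set [n]. Suppose that |⟨{i}⟩_{G_1}| = |⟨{i}⟩_{G_2}| for every i ∈ [n], and that |⟨{i,j}⟩_{G_1}| = |⟨{i,j}⟩_{G_2}| for every pair i ≠ j except possibly the ⌊n/2⌋ matching pairs {1,2}, {3,4}, {5,6}, …. Then |⟨A⟩_{G_1}| = |⟨A⟩_{G_2}| for every subset A ⊆ [n]. Consequently D(n) ≤ ⌈n/2⌉ + n(n−1)/2: there is a set of ⌈n/2⌉ + C(n,2) words whose G-weights suffice to reconstruct any metric based on a directed graph with n vertices. -/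
/-!
A vertex `u` dominates `v` exactly when adding `v` to `{u}` does not enlarge the closure, so the
sizes on `{u}` and `{u, v}` decide whether `u` dominates `v`. If this settles every `v` but one,
then the size of the closure of `{u}` settles the last one too. Hence the pairs of any matching can
be left out.
-/

theorem eq_of_ncard_eq_of_symmDiff_subsingleton {α : Type*} {s t : Set α} (hs : s.Finite)
    (hcard : s.ncard = t.ncard) (hst : (symmDiff s t).Subsingleton) : s = t := by
  have ht : t.Finite := .of_sdiff (hst.finite.subset Set.subset_union_right) hs
  by_cases hsub : s ⊆ t
  · exact Set.eq_of_subset_of_ncard_le hsub hcard.ge ht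
  · obtain ⟨x, hxs, hxt⟩ := Set.not_subset.1 hsub
    refine (Set.eq_of_subset_of_ncard_le (fun y hyt => ?_) hcard.le hs).symm
    by_contra hys
    have hxy : x = y := hst (.inl ⟨hxs, hxt⟩) (.inr ⟨hyt, hys⟩)
    exact hxt (hxy ▸ hyt)

section ForwardClosure

variable {V : Type*} {E E₁ E₂ : V → V → Prop} {M : SimpleGraph V} {u v : V}

/-- The closure `⟨X⟩_E` of a set `X` of vertices of the directed graph with edge relation `E`: all
vertices dominated by an element of `X`. This is `gclosure` over an arbitrary vertex type. -/
def forwardClosure (E : V → V → Prop) (X : Set V) : Set V :=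
  {v | ∃ u ∈ X, Relation.ReflTransGen E u v}

theorem mem_forwardClosure_singleton :
    v ∈ forwardClosure E {u} ↔ Relation.ReflTransGen E u v := by
  simp [forwardClosure]

theorem forwardClosure_pair (E : V → V → Prop) (u v : V) :
    forwardClosure E {u, v} = forwardClosure E {u} ∪ forwardClosure E {v} := by
  ext w
  simp [forwardClosure]

theorem forwardClosure_singleton_subset_iff :
    forwardClosure E {v} ⊆ forwardClosure E {u} ↔ Relation.ReflTransGen E u v := by
  simp only [Set.subset_def, mem_forwardClosure_singleton]
  exact ⟨fun h => h v .refl, fun huv _ hvw => huv.trans hvw⟩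

theorem reflTransGen_iff_ncard_forwardClosure_pair_eq [Finite V] :
    Relation.ReflTransGen E u v ↔
      (forwardClosure E {u, v}).ncard = (forwardClosure E {u}).ncard := by
  rw [← forwardClosure_singleton_subset_iff, forwardClosure_pair, ← Set.union_eq_left]
  exact ⟨congrArg Set.ncard,
    fun h => (Set.eq_of_subset_of_ncard_le Set.subset_union_left h.le).symm⟩

theorem forwardClosure_singleton_eq_of_ncard_eq [Finite V]
    (hM : ∀ v, (M.neighborSet v).Subsingleton)
    (hcard : ∀ u v, ¬M.Adj u v →
      (forwardClosure E₁ {u, v}).ncard = (forwardClosure E₂ {u, v}).ncard) (u : V) :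
    forwardClosure E₁ {u} = forwardClosure E₂ {u} := by
  have hsingle : (forwardClosure E₁ {u}).ncard = (forwardClosure E₂ {u}).ncard := by
    simpa using hcard u u (M.loopless.irrefl u)
  have hagree {v : V} (huv : ¬M.Adj u v) :
      v ∈ forwardClosure E₁ {u} ↔ v ∈ forwardClosure E₂ {u} := by
    simp only [mem_forwardClosure_singleton, reflTransGen_iff_ncard_forwardClosure_pair_eq,
      hsingle, hcard u v huv]
  refine eq_of_ncard_eq_of_symmDiff_subsingleton (Set.toFinite _) hsingle
    ((hM u).anti fun v hv => ?_)
  by_contra huv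
  rcases hv with ⟨h₁, h₂⟩ | ⟨h₂, h₁⟩
  · exact h₂ ((hagree huv).1 h₁)
  · exact h₁ ((hagree huv).2 h₂)

theorem forwardClosure_eq_of_ncard_eq [Finite V] (hM : ∀ v, (M.neighborSet v).Subsingleton)
    (hcard : ∀ u v, ¬M.Adj u v →
      (forwardClosure E₁ {u, v}).ncard = (forwardClosure E₂ {u, v}).ncard) :
    forwardClosure E₁ = forwardClosure E₂ := by
  have hdom (u v : V) : Relation.ReflTransGen E₁ u v ↔ Relation.ReflTransGen E₂ u v := by
    rw [← mem_forwardClosure_singleton, forwardClosure_singleton_eq_of_ncard_eq hM hcard,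
      mem_forwardClosure_singleton]
  ext X v
  simp only [forwardClosure, hdom]

end ForwardClosure

section TestSets

variable {V : Type*} [DecidableEq V]

theorem sym2_toFinset_injective : Function.Injective (Sym2.toFinset : Sym2 V → Finset V) :=
  fun e f h => Sym2.ext fun v => by rw [← Sym2.mem_toFinset, h, Sym2.mem_toFinset]

variable [Fintype V]

/-- The supports of the test words: the singletons, and the pairs that are not edges of `M`. The
singletons come from the diagonal elements of `Sym2 V`, which are never edges. -/
def testSets (M : SimpleGraph V) [Fintype M.edgeSet] : Finset (Finset V) :=
  M.edgeFinsetᶜ.image Sym2.toFinset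

variable {M : SimpleGraph V} [Fintype M.edgeSet]

theorem nonempty_of_mem_testSets {A : Finset V} (hA : A ∈ testSets M) : A.Nonempty := by
  obtain ⟨e, -, rfl⟩ := Finset.mem_image.1 hA
  exact Finset.nonempty_iff_ne_empty.2 e.toFinset_ne_empty

theorem pair_mem_testSets {u v : V} (huv : ¬M.Adj u v) : {u, v} ∈ testSets M :=
  Finset.mem_image.2 ⟨s(u, v), by simpa using huv, Sym2.toFinset_mk_eq⟩

theorem card_testSets_add_card_edgeFinset (M : SimpleGraph V) [Fintype M.edgeSet] :
    (testSets M).card + M.edgeFinset.card = Fintype.card V + (Fintype.card V).choose 2 := by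
  rw [testSets, Finset.card_image_of_injective _ sym2_toFinset_injective,
    Finset.card_compl_add_card, Sym2.card, Nat.choose_succ_succ', Nat.choose_one_right]

end TestSets

section ConsecutivePairs

/-- The matching `{0, 1}, {2, 3}, …` on `Fin n`, which misses the last vertex if `n` is odd. -/
def consecutivePairs (n : ℕ) : SimpleGraph (Fin n) where
  Adj i j := i ≠ j ∧ i.val / 2 = j.val / 2
  symm := ⟨fun _ _ h => ⟨h.1.symm, h.2.symm⟩⟩
  loopless := ⟨fun _ h => h.1 rfl⟩

variable {n : ℕ}

theorem consecutivePairs_adj {i j : Fin n} :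
    (consecutivePairs n).Adj i j ↔ i ≠ j ∧ i.val / 2 = j.val / 2 :=
  Iff.rfl

instance : DecidableRel (consecutivePairs n).Adj :=
  fun _ _ => decidable_of_iff _ consecutivePairs_adj.symm

theorem consecutivePairs_neighborSet_subsingleton (i : Fin n) :
    ((consecutivePairs n).neighborSet i).Subsingleton := by
  intro j hj k hk
  simp only [SimpleGraph.mem_neighborSet, consecutivePairs_adj, ne_eq, Fin.ext_iff] at hj hk
  omega

theorem card_edgeFinset_consecutivePairs (n : ℕ) :
    (consecutivePairs n).edgeFinset.card = n / 2 := by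
  let edge (k : Fin (n / 2)) : Sym2 (Fin n) := s(⟨2 * k, by omega⟩, ⟨2 * k + 1, by omega⟩)
  have edge_injective : Function.Injective edge := by
    intro k l hkl
    simp only [edge, Sym2.eq_iff, Fin.ext_iff] at hkl
    omega
  have edgeFinset_eq : (consecutivePairs n).edgeFinset = Finset.univ.image edge := by
    ext ⟨i, j⟩
    simp only [SimpleGraph.mem_edgeFinset, SimpleGraph.mem_edgeSet, consecutivePairs_adj,
      Finset.mem_image, Finset.mem_univ, true_and, edge, Sym2.eq_iff, Fin.ext_iff, ne_eq]
    refine ⟨fun h => ⟨⟨i / 2, by omega⟩, by dsimp only; omega⟩, ?_⟩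
    rintro ⟨k, hk⟩
    omega
  rw [edgeFinset_eq, Finset.card_image_of_injective _ edge_injective, Finset.card_univ,
    Fintype.card_fin]

end ConsecutivePairs

theorem stmt_7_general {V : Type*} [Fintype V] (M : SimpleGraph V) [Fintype M.edgeSet]
    (hM : ∀ v, (M.neighborSet v).Subsingleton) (E₁ E₂ : V → V → Prop)
    (hsingle : ∀ i, (forwardClosure E₁ {i}).ncard = (forwardClosure E₂ {i}).ncard)
    (hpair : ∀ i j, i ≠ j → ¬M.Adj i j →
      (forwardClosure E₁ {i, j}).ncard = (forwardClosure E₂ {i, j}).ncard) :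
    (∀ A, (forwardClosure E₁ A).ncard = (forwardClosure E₂ A).ncard) ∧
    ∃ S : Finset (Finset V),
      (∀ A ∈ S, A.Nonempty) ∧
      S.card + M.edgeFinset.card = Fintype.card V + (Fintype.card V).choose 2 ∧
      ∀ E₁' E₂' : V → V → Prop,
        (∀ A ∈ S, (forwardClosure E₁' (A : Set V)).ncard =
          (forwardClosure E₂' (A : Set V)).ncard) →
        ∀ A, (forwardClosure E₁' A).ncard = (forwardClosure E₂' A).ncard := by
  classical
  have hcard (u v : V) (huv : ¬M.Adj u v) :
      (forwardClosure E₁ {u, v}).ncard = (forwardClosure E₂ {u, v}).ncard := by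
    rcases eq_or_ne u v with rfl | hne
    · simpa using hsingle u
    · exact hpair u v hne huv
  refine ⟨fun A => by rw [forwardClosure_eq_of_ncard_eq hM hcard], testSets M,
    fun _ => nonempty_of_mem_testSets, card_testSets_add_card_edgeFinset M, fun E₁' E₂' hS A => ?_⟩
  have hcard' (u v : V) (huv : ¬M.Adj u v) :
      (forwardClosure E₁' {u, v}).ncard = (forwardClosure E₂' {u, v}).ncard := by
    simpa using hS _ (pair_mem_testSets huv)
  rw [forwardClosure_eq_of_ncard_eq hM hcard']

/-- if two directed graphs on `[n]` have closures of the same cardinality on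
all singletons, and on all pairs except possibly the `⌊n/2⌋` matching pairs
`{1,2}, {3,4}, {5,6}, …` (for `0`-indexed vertices `i,j : Fin n`, the pair `{i,j}` is a
matching pair exactly when `i.val / 2 = j.val / 2`), then all their closures have the same
cardinality.  Consequently `D(n) ≤ ⌈n/2⌉ + n(n−1)/2`: there is a set `S` of
`⌈n/2⌉ + C(n,2)` words (given by their supports) whose `G`-weights suffice to reconstruct
any metric based on a directed graph with `n` vertices. -/
theorem stmt_7 {n : ℕ} (hn : 1 ≤ n)
    (E₁ E₂ : Fin n → Fin n → Prop) (hE₁ : Irreflexive E₁) (hE₂ : Irreflexive E₂)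
    (hsingle : ∀ i : Fin n, (gclosure E₁ {i}).ncard = (gclosure E₂ {i}).ncard)
    (hpair : ∀ i j : Fin n, i ≠ j → i.val / 2 ≠ j.val / 2 →
      (gclosure E₁ {i, j}).ncard = (gclosure E₂ {i, j}).ncard) :
    (∀ A : Set (Fin n), (gclosure E₁ A).ncard = (gclosure E₂ A).ncard) ∧
    ∃ S : Finset (Finset (Fin n)),
      (∀ A ∈ S, A.Nonempty) ∧
      S.card = (n + 1) / 2 + n.choose 2 ∧
      ∀ E₁' E₂' : Fin n → Fin n → Prop, Irreflexive E₁' → Irreflexive E₂' →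
        (∀ A ∈ S, (gclosure E₁' (A : Set (Fin n))).ncard =
          (gclosure E₂' (A : Set (Fin n))).ncard) →
        ∀ A : Set (Fin n), (gclosure E₁' A).ncard = (gclosure E₂' A).ncard := by
  obtain ⟨hA, S, hne, hcard, hS⟩ := stmt_7_general (consecutivePairs n)
    consecutivePairs_neighborSet_subsingleton E₁ E₂ hsingle
    fun i j hij hadj => hpair i j hij fun hdiv => hadj ⟨hij, hdiv⟩
  rw [card_edgeFinset_consecutivePairs, Fintype.card_fin] at hcard
  exact ⟨hA, S, hne, by omega, fun E₁' E₂' _ _ => hS E₁' E₂'⟩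
end

section
/- Let n ≥ 2. Given any family S of nonempty subsets of [n] with |S| < ⌈n/2⌉ + n(n−1)/2, there exist two directed graphs G_1 and G_2 on [n] such that |⟨A⟩_{G_1}| = |⟨A⟩_{G_2}| for every A ∈ S, but |⟨B⟩_{G_1}| ≠ |⟨B⟩_{G_2}| for some subset B ⊆ [n]; that is, fewer than ⌈n/2⌉ + C(n,2) prescribed G-weights never suffice to reconstruct every graph metric, so D(n) ≥ ⌈n/2⌉ + n(n−1)/2. -/
/-!
Fix distinct `j`, `k` and a vertex `i ≠ k`, possibly `i = j`. Let every vertex outside `{i, j, k}`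
dominate everything, and let the only other edge be `i → j` (none if `i = j`) in one graph and
`i → k` in the other. The weights of `A` then differ exactly when `i ∈ A ⊆ {i, j, k}` and `A`
contains one of `j`, `k` but not the other. Hence a family `S` determining all weights contains
every singleton (take `j = i`) and, for distinct `i`, `j`, `k`, one of the pairs `{i, j}`, `{i, k}`.
The pairs missing from `S` thus form a matching, so there are at most `⌊n/2⌋` of them.
-/

section HubGraph

variable {α : Type*} {T : Set α} {i j u v : α}

/-- The directed graph in which every vertex outside `T` has an edge to all other vertices and the
only further edge is `i → j`. With `i = j` there is no further edge. It is used to show which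
subsets of `T` must be queried. -/
def hubGraph (T : Set α) (i j u v : α) : Prop :=
  u ≠ v ∧ (u ∉ T ∨ u = i ∧ v = j)

theorem irrefl_hubGraph : Std.Irrefl (hubGraph T i j) :=
  ⟨fun _ h ↦ h.1 rfl⟩

theorem reflTransGen_hubGraph (h : u ∉ T ∨ u = i ∧ v = j) :
    Relation.ReflTransGen (hubGraph T i j) u v := by
  by_cases huv : u = v
  · exact huv ▸ .refl
  · exact .single ⟨huv, h⟩

theorem reflTransGen_hubGraph_iff (hj : j ∈ T) :
    Relation.ReflTransGen (hubGraph T i j) u v ↔ u = v ∨ u ∉ T ∨ u = i ∧ v = j := by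
  constructor
  · intro h
    induction h with
    | refl => exact .inl rfl
    | tail _ hedge ih =>
      -- No edge leaves `j`: as `j ∈ T`, it could only be `i → j` with `i = j`, which is a loop.
      rcases hedge with ⟨hne, hout | ⟨rfl, rfl⟩⟩ <;> grind
  · rintro (rfl | h)
    · exact .refl
    · exact reflTransGen_hubGraph h

end HubGraph

section Weight

variable {n : ℕ} {T A : Set (Fin n)} {i j k : Fin n}

theorem gclosure_hubGraph_of_not_subset (hA : ¬A ⊆ T) :
    gclosure (hubGraph T i j) A = Set.univ := by
  obtain ⟨u, huA, huT⟩ := Set.not_subset.1 hA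
  exact Set.eq_univ_of_forall fun v ↦ ⟨u, huA, reflTransGen_hubGraph (.inl huT)⟩

theorem gclosure_hubGraph_of_mem (hj : j ∈ T) (hA : A ⊆ T) (hi : i ∈ A) :
    gclosure (hubGraph T i j) A = insert j A := by
  ext v
  simp only [gclosure, reflTransGen_hubGraph_iff hj, Set.mem_ofPred_eq, Set.mem_insert_iff]
  grind

theorem gclosure_hubGraph_of_notMem (hj : j ∈ T) (hA : A ⊆ T) (hi : i ∉ A) :
    gclosure (hubGraph T i j) A = A := by
  ext v
  simp only [gclosure, reflTransGen_hubGraph_iff hj, Set.mem_ofPred_eq]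
  grind

theorem ncard_gclosure_hubGraph_eq_iff (hj : j ∈ T) (hk : k ∈ T) :
    (gclosure (hubGraph T i j) A).ncard = (gclosure (hubGraph T i k) A).ncard ↔
      (A ⊆ T → i ∈ A → (j ∈ A ↔ k ∈ A)) := by
  classical
  by_cases hA : A ⊆ T
  · by_cases hi : i ∈ A
    · rw [gclosure_hubGraph_of_mem hj hA hi, gclosure_hubGraph_of_mem hk hA hi,
        Set.ncard_insert_eq_ite, Set.ncard_insert_eq_ite]
      grind
    · simp [gclosure_hubGraph_of_notMem hj hA hi, gclosure_hubGraph_of_notMem hk hA hi, hi]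
  · simp [gclosure_hubGraph_of_not_subset hA, hA]

end Weight

section Reconstruction

variable {n : ℕ} {S : Finset (Finset (Fin n))} {i j k : Fin n}

/-- The family `S` suffices to reconstruct every graph metric: two loopless directed graphs whose
weights agree on the members of `S` have the same weights on all subsets. -/
def DeterminesMetric (S : Finset (Finset (Fin n))) : Prop :=
  ∀ E₁ E₂ : Fin n → Fin n → Prop, Std.Irrefl E₁ → Std.Irrefl E₂ →
    (∀ A ∈ S, (gclosure E₁ (A : Set (Fin n))).ncard = (gclosure E₂ (A : Set (Fin n))).ncard) →
    ∀ B : Set (Fin n), (gclosure E₁ B).ncard = (gclosure E₂ B).ncard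

namespace DeterminesMetric

theorem exists_mem_separating (hS : DeterminesMetric S) (hik : i ≠ k) (hjk : j ≠ k) :
    ∃ A ∈ S, A ⊆ {i, j, k} ∧ i ∈ A ∧ ¬(j ∈ A ↔ k ∈ A) := by
  by_contra! hsep
  let T : Set (Fin n) := {i, j, k}
  have hj : j ∈ T := by simp [T]
  have hk : k ∈ T := by simp [T]
  have hagree : ∀ A ∈ S, (gclosure (hubGraph T i j) (A : Set (Fin n))).ncard =
      (gclosure (hubGraph T i k) (A : Set (Fin n))).ncard := fun A hA ↦
    (ncard_gclosure_hubGraph_eq_iff hj hk).2 fun hAT hiA ↦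
      hsep A hA (by simpa [T, ← Finset.coe_subset] using hAT) hiA
  have hpair := (ncard_gclosure_hubGraph_eq_iff (i := i) hj hk).1
    (hS _ _ irrefl_hubGraph irrefl_hubGraph hagree {i, j}) (by grind) (by simp)
  grind

theorem singleton_mem [Nontrivial (Fin n)] (hS : DeterminesMetric S) (i : Fin n) : {i} ∈ S := by
  obtain ⟨k, hki⟩ := exists_ne i
  obtain ⟨A, hAS, hAsub, hiA, hsep⟩ := hS.exists_mem_separating hki.symm hki.symm
  have hA : A = {i} := by grind
  exact hA ▸ hAS

theorem pair_mem_or_pair_mem (hS : DeterminesMetric S) (hik : i ≠ k) (hjk : j ≠ k) :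
    {i, j} ∈ S ∨ {i, k} ∈ S := by
  obtain ⟨A, hAS, hAsub, hiA, hsep⟩ := hS.exists_mem_separating hik hjk
  have hA : A = {i, j} ∨ A = {i, k} := by grind
  rcases hA with rfl | rfl
  · exact .inl hAS
  · exact .inr hAS

end DeterminesMetric

end Reconstruction

section Counting

variable {α : Type*} [Fintype α] {S : Finset (Finset α)}

theorem card_le_card_filter_card_eq_one (hS : ∀ i, {i} ∈ S) :
    Fintype.card α ≤ {A ∈ S | A.card = 1}.card :=
  Finset.card_le_card_of_injOn (s := Finset.univ) (fun i ↦ {i}) (by simp [Set.MapsTo, hS])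
    Finset.singleton_injective.injOn

variable [DecidableEq α]

theorem card_filter_card_eq_two_notMem_mul_two_le
    (hS : ∀ i j k, i ≠ j → i ≠ k → j ≠ k → {i, j} ∈ S ∨ {i, k} ∈ S) :
    {A ∈ Finset.powersetCard 2 (Finset.univ : Finset α) | A ∉ S}.card * 2 ≤ Fintype.card α := by
  set M : Finset (Finset α) := {A ∈ Finset.powersetCard 2 Finset.univ | A ∉ S} with hM
  have card_eq_two_of_mem : ∀ A ∈ M, A.card = 2 := by simp +contextual [hM]
  have exists_eq_pair : ∀ A ∈ M, ∀ i ∈ A, ∃ j, i ≠ j ∧ A = {i, j} := by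
    intro A hA i hi
    obtain ⟨a, b, hab, rfl⟩ := Finset.card_eq_two.1 (card_eq_two_of_mem A hA)
    rcases Finset.mem_insert.1 hi with rfl | hib
    · exact ⟨b, hab, rfl⟩
    · obtain rfl := Finset.mem_singleton.1 hib
      exact ⟨a, hab.symm, Finset.pair_comm a i⟩
  have at_most_one_pair : ∀ i, {A ∈ M | i ∈ A}.card ≤ 1 := by
    refine fun i ↦ Finset.card_le_one.2 fun A hA B hB ↦ ?_
    rw [Finset.mem_filter] at hA hB
    obtain ⟨j, hij, rfl⟩ := exists_eq_pair A hA.1 i hA.2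
    obtain ⟨k, hik, rfl⟩ := exists_eq_pair B hB.1 i hB.2
    by_contra hne
    have hjk : j ≠ k := by grind
    have := hS i j k hij hik hjk
    grind
  calc M.card * 2 = ∑ A ∈ M, A.card := (Finset.sum_const_nat card_eq_two_of_mem).symm
    _ ≤ Fintype.card α * 1 := Finset.sum_card_le at_most_one_pair
    _ = Fintype.card α := mul_one _

theorem choose_two_le_card_filter_card_eq_two_add
    (hS : ∀ i j k, i ≠ j → i ≠ k → j ≠ k → {i, j} ∈ S ∨ {i, k} ∈ S) :
    (Fintype.card α).choose 2 ≤ {A ∈ S | A.card = 2}.card + Fintype.card α / 2 := by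
  have hpresent : {A ∈ Finset.powersetCard 2 (Finset.univ : Finset α) | A ∈ S} =
      {A ∈ S | A.card = 2} := by
    ext A
    simp [and_comm]
  have hsplit := Finset.card_filter_add_card_filter_not
    (s := Finset.powersetCard 2 (Finset.univ : Finset α)) (· ∈ S)
  rw [hpresent, Finset.card_powersetCard, Finset.card_univ] at hsplit
  have := card_filter_card_eq_two_notMem_mul_two_le hS
  lia

theorem le_card_filter_card_eq_one_or_two (hS₁ : ∀ i, {i} ∈ S)
    (hS₂ : ∀ i j k, i ≠ j → i ≠ k → j ≠ k → {i, j} ∈ S ∨ {i, k} ∈ S) :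
    (Fintype.card α + 1) / 2 + (Fintype.card α).choose 2 ≤
      {A ∈ S | A.card = 1 ∨ A.card = 2}.card := by
  have hdisj : Disjoint {A ∈ S | A.card = 1} {A ∈ S | A.card = 2} :=
    Finset.disjoint_filter.2 fun _ _ h₁ h₂ ↦ by lia
  rw [Finset.filter_or, Finset.card_union_of_disjoint hdisj]
  have := card_le_card_filter_card_eq_one hS₁
  have := choose_two_le_card_filter_card_eq_two_add hS₂
  lia

end Counting

theorem stmt_8_general {n : ℕ} (hn : 2 ≤ n) (S : Finset (Finset (Fin n)))
    (hcard : {A ∈ S | A.card = 1 ∨ A.card = 2}.card < (n + 1) / 2 + n.choose 2) :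
    ∃ E₁ E₂ : Fin n → Fin n → Prop, Std.Irrefl E₁ ∧ Std.Irrefl E₂ ∧
      (∀ A ∈ S, (gclosure E₁ (A : Set (Fin n))).ncard =
        (gclosure E₂ (A : Set (Fin n))).ncard) ∧
      ∃ B : Set (Fin n), (gclosure E₁ B).ncard ≠ (gclosure E₂ B).ncard := by
  by_contra! hS
  replace hS : DeterminesMetric S := hS
  have : Nontrivial (Fin n) := Fin.nontrivial_iff_two_le.2 hn
  have hle := le_card_filter_card_eq_one_or_two hS.singleton_mem
    fun i j k _ hik hjk ↦ hS.pair_mem_or_pair_mem hik hjk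
  rw [Fintype.card_fin] at hle
  exact hcard.not_ge hle

/-- for `n ≥ 2`, given any family `S` of nonempty subsets of `[n]` with
`|S| < ⌈n/2⌉ + C(n,2)`, there are two directed graphs on `[n]` whose closures agree in
cardinality on every member of `S` but not on all subsets; hence `D(n) ≥ ⌈n/2⌉ + n(n−1)/2`. -/
theorem stmt_8 {n : ℕ} (hn : 2 ≤ n)
    (S : Finset (Finset (Fin n))) (hSne : ∀ A ∈ S, A.Nonempty)
    (hcard : S.card < (n + 1) / 2 + n.choose 2) :
    ∃ E₁ E₂ : Fin n → Fin n → Prop, Irreflexive E₁ ∧ Irreflexive E₂ ∧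
      (∀ A ∈ S, (gclosure E₁ (A : Set (Fin n))).ncard =
        (gclosure E₂ (A : Set (Fin n))).ncard) ∧
      ∃ B : Set (Fin n), (gclosure E₁ B).ncard ≠ (gclosure E₂ B).ncard := by
  obtain ⟨E₁, E₂, h₁, h₂, h⟩ := stmt_8_general hn S ((Finset.card_filter_le _ _).trans_lt hcard)
  exact ⟨E₁, E₂, h₁.irrefl, h₂.irrefl, h⟩
end

section
/- For every directed graph G on the vertex set [n] there exists a family S of nonempty subsets of [n] with |S| ≤ 2n − 1 such that for any directed graph G' on [n], if |⟨A⟩_{G'}| = |⟨A⟩_G| for all A ∈ S, then |⟨A⟩_{G'}| = |⟨A⟩_G| for all subsets A ⊆ [n]. In other words, M^max(n) ≤ 2n − 1: for any graph metric, at most 2n − 1 G-weights are needed to determine the whole metric. -/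
/-!
Write `c` and `c'` for the closures of two graphs `G` and `G'`, and test the weights of all
singletons `{v}` and of all sets `c {v}`. If `c {v}` has the same weight in `G'` as in `G`, then it
is closed for `c'` too, so `c' {v} ⊆ c {v}`; if moreover the weights of `{v}` agree, this inclusion
is an equality. Hence `G'` has the same reachability relation as `G`, and so the same weights.

Of these `n + n` tests two coincide. Either `c {u} = c {v}` for some `u ≠ v`, or, taking `m` with
`c {m}` minimal, `c {m}` contains no other vertex, so that `c {m} = {m}` is itself a singleton.
-/

section ClosureOperator

variable {V : Type*}

theorem closure_eq_of_strictMono {α β : Type*} [PartialOrder α] [Preorder β] {w : α → β}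
    (hw : StrictMono w) {c c' : ClosureOperator α} {a : α} (ha : w (c' a) = w (c a))
    (hca : w (c' (c a)) = w (c a)) : c' a = c a := by
  have eq_of_le {x y : α} (hxy : x ≤ y) (h : w x = w y) : x = y :=
    hxy.eq_of_not_lt fun hlt => (hw hlt).ne h
  have closed : c'.IsClosed (c a) :=
    c'.isClosed_iff.2 (eq_of_le (c'.le_closure (c a)) hca.symm).symm
  exact eq_of_le (ClosureOperator.closure_min (c.le_closure a) closed) ha

theorem exists_isClosed_singleton_of_injective [Finite V] [Nonempty V]
    {c : ClosureOperator (Set V)} (hc : Function.Injective fun v => c {v}) :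
    ∃ v, c.IsClosed {v} := by
  obtain ⟨m, -, hm⟩ := exists_minimalFor_of_wellFoundedLT
    (fun _ : V => True) (fun v => c {v}) ⟨Classical.arbitrary V, trivial⟩
  refine ⟨m, c.isClosed_iff_closure_le.2 fun u hu => ?_⟩
  have hum : c {u} ≤ c {m} := c.le_closure_iff.1 (Set.singleton_subset_iff.2 hu)
  exact hc (hum.antisymm (hm trivial hum))

variable [Fintype V]

open Classical in
/-- The sets whose weights determine the closure operator `c` on singletons: all singletons and
their closures. -/
noncomputable def determiningFamily (c : ClosureOperator (Set V)) : Finset (Finset V) :=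
  Finset.univ.image (fun v => {v}) ∪ Finset.univ.image fun v => (c {v}).toFinite.toFinset

theorem singleton_mem_determiningFamily (c : ClosureOperator (Set V)) (v : V) :
    {v} ∈ determiningFamily c := by
  simp [determiningFamily]

theorem toFinset_closure_mem_determiningFamily (c : ClosureOperator (Set V)) (v : V) :
    (c {v}).toFinite.toFinset ∈ determiningFamily c := by
  simp [determiningFamily]

theorem nonempty_of_mem_determiningFamily {c : ClosureOperator (Set V)} {A : Finset V}
    (hA : A ∈ determiningFamily c) : A.Nonempty := by
  simp only [determiningFamily, Finset.mem_union, Finset.mem_image, Finset.mem_univ,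
    true_and] at hA
  obtain ⟨v, rfl⟩ | ⟨v, rfl⟩ := hA
  · exact Finset.singleton_nonempty v
  · exact (c {v}).toFinite.toFinset_nonempty.2 ((Set.singleton_nonempty v).mono (c.le_closure {v}))

theorem card_determiningFamily_le [Nonempty V] (c : ClosureOperator (Set V)) :
    (determiningFamily c).card ≤ 2 * Fintype.card V - 1 := by
  classical
  set singletons : Finset (Finset V) := Finset.univ.image fun v => {v}
  set closures : Finset (Finset V) := Finset.univ.image fun v => (c {v}).toFinite.toFinset
  have card_singletons : singletons.card ≤ Fintype.card V := Finset.card_image_le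
  have card_closures : closures.card ≤ Fintype.card V := Finset.card_image_le
  have card_family : (determiningFamily c).card + (singletons ∩ closures).card =
      singletons.card + closures.card := Finset.card_union_add_card_inter _ _
  by_cases hc : Function.Injective fun v => c {v}
  · obtain ⟨v, hv⟩ := exists_isClosed_singleton_of_injective hc
    have mem_inter : {v} ∈ singletons ∩ closures := Finset.mem_inter.2
      ⟨Finset.mem_image_of_mem _ (Finset.mem_univ v),
        Finset.mem_image.2 ⟨v, Finset.mem_univ v, by simp [hv.closure_eq]⟩⟩
    have inter_pos : 0 < (singletons ∩ closures).card := Finset.card_pos.2 ⟨_, mem_inter⟩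
    lia
  · have card_ne : closures.card ≠ Fintype.card V := fun h =>
      hc fun u v huv => Finset.card_image_iff.1 h (Finset.mem_coe.2 (Finset.mem_univ u))
        (Finset.mem_coe.2 (Finset.mem_univ v)) (Set.Finite.toFinset_inj.2 huv)
    lia

theorem closure_singleton_eq_of_ncard_eq_on_determiningFamily {c c' : ClosureOperator (Set V)}
    (h : ∀ A ∈ determiningFamily c, (c' (A : Set V)).ncard = (c (A : Set V)).ncard) (v : V) :
    c' {v} = c {v} := by
  have ncard_singleton := h _ (singleton_mem_determiningFamily c v)
  have ncard_closure := h _ (toFinset_closure_mem_determiningFamily c v)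
  rw [Finset.coe_singleton] at ncard_singleton
  rw [Set.Finite.coe_toFinset, c.idempotent] at ncard_closure
  exact closure_eq_of_strictMono Set.ncard_strictMono ncard_singleton ncard_closure

end ClosureOperator

section Reachability

variable {V : Type*}

/-- The closure operator of the directed graph `E`, sending a set of vertices to the set of all
vertices it dominates; on `Fin n` it is definitionally `gclosure E`. -/
def reachability (E : V → V → Prop) : ClosureOperator (Set V) :=
  ClosureOperator.mk₂ (fun X => {v | ∃ u ∈ X, Relation.ReflTransGen E u v})
    (fun _ v hv => ⟨v, hv, .refl⟩)
    (fun _ _ hXY _ ⟨_, hu, huv⟩ =>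
      let ⟨t, ht, htu⟩ := hXY hu
      ⟨t, ht, htu.trans huv⟩)

theorem mem_reachability {E : V → V → Prop} {X : Set V} {v : V} :
    v ∈ reachability E X ↔ ∃ u ∈ X, Relation.ReflTransGen E u v :=
  Iff.rfl

theorem mem_reachability_singleton {E : V → V → Prop} {u v : V} :
    v ∈ reachability E {u} ↔ Relation.ReflTransGen E u v := by
  simp only [mem_reachability, Set.mem_singleton_iff, exists_eq_left]

theorem reachability_eq_of_singleton {E E' : V → V → Prop}
    (h : ∀ v, reachability E' {v} = reachability E {v}) : reachability E' = reachability E := by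
  have same_paths (u v : V) : Relation.ReflTransGen E' u v ↔ Relation.ReflTransGen E u v := by
    rw [← mem_reachability_singleton, h, mem_reachability_singleton]
  ext X v
  simp only [mem_reachability, same_paths]

end Reachability

theorem stmt_10_general {V : Type*} [Fintype V] [Nonempty V] (E : V → V → Prop) :
    ∃ S : Finset (Finset V),
      (∀ A ∈ S, A.Nonempty) ∧
      S.card ≤ 2 * Fintype.card V - 1 ∧
      ∀ E' : V → V → Prop,
        (∀ A ∈ S, (reachability E' (A : Set V)).ncard = (reachability E (A : Set V)).ncard) →
        reachability E' = reachability E :=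
  ⟨determiningFamily (reachability E), fun _ => nonempty_of_mem_determiningFamily,
    card_determiningFamily_le _, fun _ h => reachability_eq_of_singleton
      (closure_singleton_eq_of_ncard_eq_on_determiningFamily h)⟩

/-- for every directed graph `G` on `[n]` there is a family `S` of at most
`2n − 1` nonempty subsets of `[n]` (supports of words) such that any directed graph on `[n]`
agreeing with `G` on the closure cardinalities of the members of `S` agrees with `G` on the
closure cardinalities of all subsets; i.e. `M^max(n) ≤ 2n − 1`. -/
theorem stmt_10 {n : ℕ} (hn : 1 ≤ n)
    (E : Fin n → Fin n → Prop) (hE : Irreflexive E) :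
    ∃ S : Finset (Finset (Fin n)),
      (∀ A ∈ S, A.Nonempty) ∧
      S.card ≤ 2 * n - 1 ∧
      ∀ E' : Fin n → Fin n → Prop, Irreflexive E' →
        (∀ A ∈ S, (gclosure E' (A : Set (Fin n))).ncard =
          (gclosure E (A : Set (Fin n))).ncard) →
        ∀ A : Set (Fin n), (gclosure E' A).ncard = (gclosure E A).ncard := by
  have : Nonempty (Fin n) := ⟨⟨0, hn⟩⟩
  obtain ⟨S, hS, hcard, determines⟩ := stmt_10_general E
  exact ⟨S, hS, by simpa using hcard,
    fun E' _ h A => congrArg (fun c => (c A).ncard) (determines E' h)⟩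
end

section
/- For every n ≥ 4 there exists a directed graph G on the vertex set [n] such that every family S of nonempty subsets of [n] with the property that any directed graph G' on [n] agreeing with G on the closure cardinalities of the members of S agrees with G on the closure cardinalities of all subsets, must satisfy |S| ≥ 2n − 4. In other words, M^max(n) ≥ 2n − 4. -/
/-!
The extremal graph is `ladder n`, in which `u` dominates everything at distance at least two below
it. For each vertex `i ≥ 2` its out-neighbourhood `R ∪ {i - 2}`, with `R = {v | v + 3 ≤ i}`, can be
replaced by `R`, by `R ∪ {i - 1}` or by `R ∪ {i - 1, i - 2}` without losing transitivity. Each of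
these changes is noticed by a member of a determining family, since a strict order can be recovered
from its weights. Only sets with maximum `i` can notice such a change: vertices above `i` dominate
all of these rows anyway. Finally no single set `X` notices all three changes: if `i ∈ X`, the four
closures are `W ∪ {i - 2}`, `W`, `W ∪ {i - 1}`, `W ∪ {i - 1, i - 2}` for a common set `W`, and one
of the last three has as many elements as the first. Hence a determining family has at least two
members with maximum `i`, for each of the `n - 2` vertices `i ≥ 2` (counting from `0`).
-/

theorem ncard_insert_eq_or {α : Type*} (W : Set α) (p q : α) :
    W.ncard = (insert q W).ncard ∨ (insert p W).ncard = (insert q W).ncard ∨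
      (insert p (insert q W)).ncard = (insert q W).ncard := by
  by_cases hq : q ∈ W
  · exact .inl (by rw [Set.insert_eq_of_mem hq])
  by_cases hp : p ∈ W
  · exact .inr (.inr (by rw [Set.insert_eq_of_mem (Set.mem_insert_of_mem q hp)]))
  · exact .inr (.inl (by
      simp only [Set.ncard, Set.encard_insert_of_notMem hp, Set.encard_insert_of_notMem hq]))

section Closure

variable {n : ℕ} {E E' : Fin n → Fin n → Prop} {X Y : Set (Fin n)} {u v : Fin n}

theorem subset_gclosure (E : Fin n → Fin n → Prop) (X : Set (Fin n)) : X ⊆ gclosure E X :=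
  fun v hv => ⟨v, hv, .refl⟩

theorem gclosure_mono (h : X ⊆ Y) : gclosure E X ⊆ gclosure E Y :=
  fun _ ⟨u, hu, huv⟩ => ⟨u, h hu, huv⟩

theorem gclosure_insert_of_mem (hv : v ∈ gclosure E X) :
    gclosure E (insert v X) = gclosure E X := by
  refine (gclosure_mono (Set.subset_insert v X)).antisymm' ?_
  rintro w ⟨u, rfl | hu, huw⟩
  · obtain ⟨x, hx, hxu⟩ := hv
    exact ⟨x, hx, hxu.trans huw⟩
  · exact ⟨u, hu, huw⟩

theorem mem_gclosure_iff_ncard_insert_eq :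
    v ∈ gclosure E X ↔ (gclosure E (insert v X)).ncard = (gclosure E X).ncard := by
  refine ⟨fun hv => by rw [gclosure_insert_of_mem hv], fun hcard => ?_⟩
  have heq : gclosure E X = gclosure E (insert v X) :=
    Set.eq_of_subset_of_ncard_le (gclosure_mono (Set.subset_insert v X)) hcard.le
  exact heq ▸ subset_gclosure E _ (Set.mem_insert v X)

theorem gclosure_eq_of_forall_ncard_eq
    (h : ∀ A, (gclosure E' A).ncard = (gclosure E A).ncard) : gclosure E' = gclosure E := by
  ext X v
  rw [mem_gclosure_iff_ncard_insert_eq, mem_gclosure_iff_ncard_insert_eq, h, h]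

theorem mem_gclosure_of_isTrans [IsTrans (Fin n) E] :
    v ∈ gclosure E X ↔ ∃ u ∈ X, v = u ∨ E u v := by
  simp only [gclosure, Set.mem_ofPred_eq, Relation.reflTransGen_iff_eq_or_transGen,
    Relation.transGen_eq_self]

theorem gclosure_eq_of_mem [IsTrans (Fin n) E] (hu : u ∈ X) :
    gclosure E X = insert u (gclosure E (X \ {u})) ∪ {v | E u v} := by
  ext v
  conv_lhs => rw [← Set.insert_sdiff_self_of_mem hu]
  simp only [mem_gclosure_of_isTrans, Set.mem_insert_iff, exists_eq_or_imp, Set.mem_union,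
    Set.mem_ofPred_eq]
  exact or_right_comm

theorem rel_iff_ne_and_mem_gclosure_singleton [IsStrictOrder (Fin n) E] :
    E u v ↔ v ≠ u ∧ v ∈ gclosure E {u} := by
  simp only [mem_gclosure_of_isTrans, Set.mem_singleton_iff, exists_eq_left]
  exact ⟨fun h => ⟨(ne_of_irrefl h).symm, .inr h⟩, fun ⟨hne, h⟩ => h.resolve_left hne⟩

theorem rel_eq_of_forall_ncard_gclosure_eq [IsStrictOrder (Fin n) E] [IsStrictOrder (Fin n) E']
    (h : ∀ A, (gclosure E' A).ncard = (gclosure E A).ncard) : E' = E := by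
  ext u v
  simp only [rel_iff_ne_and_mem_gclosure_singleton, gclosure_eq_of_forall_ncard_eq h]

end Closure

section Determining

variable {n : ℕ} {E E' : Fin n → Fin n → Prop} {S : Finset (Finset (Fin n))}

/-- The vertex set `X` witnesses that the graphs `E` and `E'` have different weights. -/
def Detects (E E' : Fin n → Fin n → Prop) (X : Set (Fin n)) : Prop :=
  (gclosure E' X).ncard ≠ (gclosure E X).ncard

/-- The weights of the members of `S` determine the weight function of the graph `E` among all
directed graphs on `[n]`. The least size of such a family, maximized over `E`, is `M^max(n)`. -/
def DeterminesWeight (E : Fin n → Fin n → Prop) (S : Finset (Finset (Fin n))) : Prop :=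
  ∀ E' : Fin n → Fin n → Prop, Std.Irrefl E' →
    (∀ A ∈ S, (gclosure E' (A : Set (Fin n))).ncard = (gclosure E (A : Set (Fin n))).ncard) →
    ∀ A : Set (Fin n), (gclosure E' A).ncard = (gclosure E A).ncard

theorem DeterminesWeight.exists_detects [IsStrictOrder (Fin n) E] [IsStrictOrder (Fin n) E']
    (hS : DeterminesWeight E S) (hne : E' ≠ E) : ∃ A ∈ S, Detects E E' A := by
  by_contra! hnone
  have hagree : ∀ A ∈ S, (gclosure E' (A : Set (Fin n))).ncard = (gclosure E A).ncard :=
    fun A hA => not_not.mp (hnone A hA)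
  exact hne (rel_eq_of_forall_ncard_gclosure_eq (hS E' inferInstance hagree))

end Determining

section UpdateRow

open Function

theorem isTrans_update {α : Type*} [DecidableEq α] {E : α → α → Prop} [IsTrans α E] {i : α}
    {D : Set α} (hdown : ∀ v ∈ D, ∀ w, E v w → w ∈ D) (hup : ∀ u, E u i → ∀ v ∈ D, E u v) :
    IsTrans α (update E i (· ∈ D)) := by
  refine ⟨fun u v w huv hvw => ?_⟩
  by_cases hu : u = i <;> by_cases hv : v = i <;>
    simp only [hu, hv, update_self, ne_eq, not_false_eq_true, update_of_ne] at huv hvw ⊢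
  · exact hvw
  · exact hdown v huv w hvw
  · exact hup u huv w hvw
  · exact IsTrans.trans u v w huv hvw

theorem irrefl_update {α : Type*} [DecidableEq α] {E : α → α → Prop} [Std.Irrefl E] {i : α}
    {D : Set α} (hi : i ∉ D) : Std.Irrefl (update E i (· ∈ D)) := by
  refine ⟨fun u hu => ?_⟩
  rcases eq_or_ne u i with rfl | hne
  · exact hi (by rwa [update_self] at hu)
  · exact irrefl u (by rwa [update_of_ne hne] at hu)

variable {n : ℕ} {E : Fin n → Fin n → Prop} [IsTrans (Fin n) E] {i : Fin n} {D X : Set (Fin n)}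

theorem gclosure_update_of_notMem [IsTrans (Fin n) (update E i (· ∈ D))] (hi : i ∉ X) :
    gclosure (update E i (· ∈ D)) X = gclosure E X := by
  ext v
  simp only [mem_gclosure_of_isTrans]
  refine exists_congr fun u => and_congr_right fun hu => ?_
  rw [update_of_ne (ne_of_mem_of_not_mem hu hi)]

theorem gclosure_update_of_mem [IsTrans (Fin n) (update E i (· ∈ D))] (hi : i ∈ X) :
    gclosure (update E i (· ∈ D)) X = insert i (gclosure E (X \ {i})) ∪ D := by
  rw [gclosure_eq_of_mem hi, gclosure_update_of_notMem (fun h => h.2 rfl), update_self]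
  rfl

theorem gclosure_update_eq_of_subset [IsTrans (Fin n) (update E i (· ∈ D))]
    (hD : D ⊆ gclosure E (X \ {i})) (hE : {v | E i v} ⊆ gclosure E (X \ {i})) :
    gclosure (update E i (· ∈ D)) X = gclosure E X := by
  by_cases hi : i ∈ X
  · have hsub := Set.subset_insert i (gclosure E (X \ {i}))
    rw [gclosure_update_of_mem hi, gclosure_eq_of_mem hi,
      Set.union_eq_self_of_subset_right (hD.trans hsub),
      Set.union_eq_self_of_subset_right (hE.trans hsub)]
  · exact gclosure_update_of_notMem hi

theorem not_detects_three_updates {p q : Fin n} {R : Set (Fin n)}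
    [IsTrans (Fin n) (update E i (· ∈ R))] [IsTrans (Fin n) (update E i (· ∈ insert p R))]
    [IsTrans (Fin n) (update E i (· ∈ insert p (insert q R)))]
    (hE : {v | E i v} = insert q R) :
    ¬(Detects E (update E i (· ∈ R)) X ∧ Detects E (update E i (· ∈ insert p R)) X ∧
      Detects E (update E i (· ∈ insert p (insert q R))) X) := by
  rintro ⟨hR, hp, hpq⟩
  by_cases hi : i ∈ X
  · simp only [Detects, gclosure_update_of_mem hi, gclosure_eq_of_mem hi, hE,
      Set.union_insert] at hR hp hpq
    rcases ncard_insert_eq_or (insert i (gclosure E (X \ {i})) ∪ R) p q with h | h | h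
    exacts [hR h, hp h, hpq h]
  · exact hR (by rw [gclosure_update_of_notMem hi])

end UpdateRow

section Ladder

open Function

variable {n : ℕ} {i q : Fin n} {D X : Set (Fin n)}

/-- The extremal graph: `u` has an edge to each vertex at distance at least two below it. -/
def ladder (n : ℕ) (u v : Fin n) : Prop := (v : ℕ) + 2 ≤ u

/-- The vertices at distance at least three below `i`; every modified out-neighbourhood of `i` in
`ladder n` contains them. -/
def farBelow (i : Fin n) : Set (Fin n) := {v | (v : ℕ) + 3 ≤ i}

instance : IsStrictOrder (Fin n) (ladder n) where
  irrefl u h := by unfold ladder at h; omega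
  trans u v w huv hvw := by unfold ladder at *; omega

theorem setOf_ladder_eq_insert (hq : (q : ℕ) + 2 = i) :
    {v | ladder n i v} = insert q (farBelow i) := by
  ext v
  simp only [ladder, farBelow, Set.mem_insert_iff, Set.mem_ofPred_eq, Fin.ext_iff]
  omega

theorem setOf_ladder_subset_Iio (i : Fin n) : {v | ladder n i v} ⊆ Set.Iio i := by
  intro v hv
  simp only [ladder, Set.mem_ofPred_eq] at hv
  exact Fin.lt_def.mpr (by omega)

theorem isStrictOrder_update_ladder (hD : D ∈ Set.Icc (farBelow i) (Set.Iio i)) :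
    IsStrictOrder (Fin n) (update (ladder n) i (· ∈ D)) := by
  have : Std.Irrefl (update (ladder n) i (· ∈ D)) :=
    irrefl_update fun hi => lt_irrefl i (hD.2 hi)
  have : IsTrans (Fin n) (update (ladder n) i (· ∈ D)) := by
    refine isTrans_update (fun v hv w hvw => hD.1 ?_) fun u hui v hv => ?_
    all_goals
      have hvi : (v : ℕ) < i := hD.2 hv
      simp only [ladder, farBelow, Set.mem_ofPred_eq] at *
      omega
  exact {}

theorem Iio_subset_gclosure_ladder {y : Fin n} (hy : y ∈ X) (hiy : i < y) :
    Set.Iio i ⊆ gclosure (ladder n) X := by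
  intro v hv
  have hvi : (v : ℕ) < i := hv
  exact ⟨y, hy, .single (by unfold ladder; omega)⟩

theorem isGreatest_of_detects_update_ladder (hD : D ∈ Set.Icc (farBelow i) (Set.Iio i))
    (h : Detects (ladder n) (update (ladder n) i (· ∈ D)) X) : IsGreatest X i := by
  have := isStrictOrder_update_ladder hD
  constructor
  · by_contra hi
    exact h (by rw [gclosure_update_of_notMem hi])
  · intro y hy
    by_contra! hiy
    have hIio : Set.Iio i ⊆ gclosure (ladder n) (X \ {i}) :=
      Iio_subset_gclosure_ladder ⟨hy, hiy.ne'⟩ hiy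
    exact h (by rw [gclosure_update_eq_of_subset (hD.2.trans hIio)
      ((setOf_ladder_subset_Iio i).trans hIio)])

theorem DeterminesWeight.exists_isGreatest_detects_update {S : Finset (Finset (Fin n))}
    (hS : DeterminesWeight (ladder n) S) (hD : D ∈ Set.Icc (farBelow i) (Set.Iio i))
    (hne : D ≠ {v | ladder n i v}) :
    ∃ A ∈ S, IsGreatest (A : Set (Fin n)) i ∧
      Detects (ladder n) (update (ladder n) i (· ∈ D)) A := by
  have := isStrictOrder_update_ladder hD
  have hupdate : update (ladder n) i (· ∈ D) ≠ ladder n := by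
    rw [Ne, update_eq_self_iff]
    exact fun heq => hne (congrArg Set.ofPred heq)
  obtain ⟨A, hA, hdet⟩ := hS.exists_detects hupdate
  exact ⟨A, hA, isGreatest_of_detects_update_ladder hD hdet, hdet⟩

theorem DeterminesWeight.exists_ne_isGreatest {S : Finset (Finset (Fin n))}
    (hS : DeterminesWeight (ladder n) S) (hi : 2 ≤ (i : ℕ)) :
    ∃ A ∈ S, ∃ B ∈ S, A ≠ B ∧ IsGreatest (A : Set (Fin n)) i ∧ IsGreatest (B : Set (Fin n)) i := by
  obtain ⟨p, hp⟩ : ∃ p : Fin n, (p : ℕ) + 1 = i := ⟨⟨i - 1, by omega⟩, by simp only; omega⟩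
  obtain ⟨q, hq⟩ : ∃ q : Fin n, (q : ℕ) + 2 = i := ⟨⟨i - 2, by omega⟩, by simp only; omega⟩
  have hrow := setOf_ladder_eq_insert hq
  have hp_notMem : p ∉ insert q (farBelow i) := by
    simp only [farBelow, Set.mem_insert_iff, Set.mem_ofPred_eq, Fin.ext_iff]; omega
  have hq_notMem : q ∉ insert p (farBelow i) := by
    simp only [farBelow, Set.mem_insert_iff, Set.mem_ofPred_eq, Fin.ext_iff]; omega
  have hIio : insert p (insert q (farBelow i)) ⊆ Set.Iio i := by
    rw [← hrow]
    exact Set.insert_subset (Fin.lt_def.mpr (by omega)) (setOf_ladder_subset_Iio i)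
  have hR : farBelow i ∈ Set.Icc (farBelow i) (Set.Iio i) :=
    ⟨subset_rfl, fun v hv => hIio (.inr (.inr hv))⟩
  have hpR : insert p (farBelow i) ∈ Set.Icc (farBelow i) (Set.Iio i) :=
    ⟨Set.subset_insert _ _, (Set.insert_subset_insert (Set.subset_insert q _)).trans hIio⟩
  have hpqR : insert p (insert q (farBelow i)) ∈ Set.Icc (farBelow i) (Set.Iio i) :=
    ⟨fun v hv => .inr (.inr hv), hIio⟩
  have := isStrictOrder_update_ladder hR
  have := isStrictOrder_update_ladder hpR
  have := isStrictOrder_update_ladder hpqR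
  obtain ⟨A, hAS, hAi, hA⟩ := hS.exists_isGreatest_detects_update hR fun h =>
    hq_notMem (.inr (h.trans hrow ▸ Set.mem_insert q _))
  obtain ⟨B, hBS, hBi, hB⟩ := hS.exists_isGreatest_detects_update hpR fun h =>
    hq_notMem (h.trans hrow ▸ Set.mem_insert q _)
  obtain ⟨C, hCS, hCi, hC⟩ := hS.exists_isGreatest_detects_update hpqR fun h =>
    hp_notMem (h.trans hrow ▸ Set.mem_insert p _)
  by_cases hAB : A = B
  · refine ⟨A, hAS, C, hCS, ?_, hAi, hCi⟩
    rintro rfl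
    exact not_detects_three_updates hrow ⟨hA, hAB ▸ hB, hC⟩
  · exact ⟨A, hAS, B, hBS, hAB, hAi, hBi⟩

end Ladder

/-- for every `n ≥ 4` there is a directed graph `G` on `[n]` such that every
family `S` of nonempty subsets of `[n]` whose closure cardinalities determine those of all
subsets (among irreflexive directed graphs on `[n]`) has `|S| ≥ 2n − 4`;
i.e. `M^max(n) ≥ 2n − 4`. -/
theorem stmt_11 (n : ℕ) (hn : 4 ≤ n) :
    ∃ E : Fin n → Fin n → Prop, Irreflexive E ∧
      ∀ S : Finset (Finset (Fin n)), (∀ A ∈ S, A.Nonempty) →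
        (∀ E' : Fin n → Fin n → Prop, Irreflexive E' →
          (∀ A ∈ S, (gclosure E' (A : Set (Fin n))).ncard =
            (gclosure E (A : Set (Fin n))).ncard) →
          ∀ A : Set (Fin n), (gclosure E' A).ncard = (gclosure E A).ncard) →
        2 * n - 4 ≤ S.card := by
  classical
  refine ⟨ladder n, fun _ => irrefl _, fun S _ hdet => ?_⟩
  have hS : DeterminesWeight (ladder n) S := fun E' hE' => hdet E' hE'.irrefl
  let isMax : Finset (Fin n) → Fin n → Prop := fun A i => IsGreatest (A : Set (Fin n)) i
  let two : Fin n := ⟨2, by omega⟩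
  have two_sets : ∀ i ∈ Finset.Ici two, 2 ≤ (S.bipartiteBelow isMax i).card := fun i hi => by
    obtain ⟨A, hAS, B, hBS, hne, hA, hB⟩ :=
      hS.exists_ne_isGreatest (Fin.le_def.mp (Finset.mem_Ici.mp hi))
    exact Finset.one_lt_card.mpr ⟨A, Finset.mem_filter.mpr ⟨hAS, hA⟩,
      B, Finset.mem_filter.mpr ⟨hBS, hB⟩, hne⟩
  have one_max : ∀ A ∈ S, ((Finset.Ici two).bipartiteAbove isMax A).card ≤ 1 := fun A _ =>
    Finset.card_le_one.mpr fun i hi j hj =>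
      (Finset.mem_filter.mp hi).2.unique (Finset.mem_filter.mp hj).2
  have hcount := Finset.card_mul_le_card_mul' isMax two_sets one_max
  rw [Fin.card_Ici, show (two : ℕ) = 2 from rfl] at hcount
  omega
end

section
/- Let G be a directed graph on the vertex set [n] and let φ be a permutation of [n] which is an automorphism of the expanded canonical form of G, i.e., for all u ≠ v, v is reachable from u by a directed path of length ≥ 1 in G if and only if φ(v) is so reachable from φ(u). Then the coordinate permutation map T_φ(x_1,…,x_n) = (x_{φ(1)},…,x_{φ(n)}) is a linear G-isometry of F_q^n. -/
open Relation

theorem reflTransGen_iff_of_transGen_iff {α β : Type*} {r : α → α → Prop} {s : β → β → Prop}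
    {f : α → β} (hf : f.Injective)
    (h : ∀ u v, u ≠ v → (TransGen r u v ↔ TransGen s (f u) (f v))) (u v : α) :
    ReflTransGen r u v ↔ ReflTransGen s (f u) (f v) := by
  rcases eq_or_ne u v with rfl | huv
  · exact iff_of_true .refl .refl
  · rw [reflTransGen_iff_eq_or_transGen, reflTransGen_iff_eq_or_transGen, h u v huv,
      hf.eq_iff]

section Reachability

variable {m n : ℕ} {E : Fin m → Fin m → Prop} {E' : Fin n → Fin n → Prop}

theorem gclosure_preimage {f : Fin m → Fin n} (hf : f.Surjective)
    (h : ∀ u v, ReflTransGen E u v ↔ ReflTransGen E' (f u) (f v)) (X : Set (Fin n)) :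
    gclosure E (f ⁻¹' X) = f ⁻¹' gclosure E' X := by
  ext v
  simp only [gclosure, Set.mem_preimage, Set.mem_ofPred_eq, h, hf.exists]

theorem gweight_comp {F : Type*} [Field F] {f : Fin m → Fin n} (hf : f.Bijective)
    (h : ∀ u v, ReflTransGen E u v ↔ ReflTransGen E' (f u) (f v)) (x : Fin n → F) :
    gweight E (x ∘ f) = gweight E' x :=
  calc (gclosure E (f ⁻¹' {i | x i ≠ 0})).ncard
      = (f ⁻¹' gclosure E' {i | x i ≠ 0}).ncard := by rw [gclosure_preimage hf.surjective h]
    _ = (gclosure E' {i | x i ≠ 0}).ncard := by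
      rw [Set.ncard, Set.encard_preimage_of_bijective hf, Set.ncard]

end Reachability

theorem stmt_13_general {n : ℕ} {F : Type*} [Field F] (E : Fin n → Fin n → Prop)
    (φ : Equiv.Perm (Fin n))
    (hφ : ∀ u v : Fin n, u ≠ v → (TransGen E u v ↔ TransGen E (φ u) (φ v))) :
    ∃ T : (Fin n → F) →ₗ[F] (Fin n → F),
      (∀ (x : Fin n → F) (i : Fin n), T x i = x (φ i)) ∧
      Function.Bijective T ∧
      ∀ x : Fin n → F, gweight E (T x) = gweight E x :=
  ⟨LinearEquiv.funCongrLeft F F φ, fun _ _ => rfl, (LinearEquiv.funCongrLeft F F φ).bijective,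
    gweight_comp φ.bijective (reflTransGen_iff_of_transGen_iff φ.injective hφ)⟩

/-- if a permutation `φ` of `[n]` is an automorphism of the expanded
canonical form of `G` (for all `u ≠ v`, `v` is reachable from `u` by a directed path of
length `≥ 1` iff `φ v` is so reachable from `φ u`), then the coordinate permutation map
`T_φ(x)_i = x_{φ(i)}` is a linear `G`-isometry of `F_q^n`. -/
theorem stmt_13 {n : ℕ} (hn : 1 ≤ n) {F : Type*} [Field F] [Fintype F]
    (E : Fin n → Fin n → Prop) (hE : Irreflexive E)
    (φ : Equiv.Perm (Fin n))
    (hφ : ∀ u v : Fin n, u ≠ v →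
      (Relation.TransGen E u v ↔ Relation.TransGen E (φ u) (φ v))) :
    ∃ T : (Fin n → F) →ₗ[F] (Fin n → F),
      (∀ (x : Fin n → F) (i : Fin n), T x i = x (φ i)) ∧
      Function.Bijective T ∧
      ∀ x : Fin n → F, gweight E (T x) = gweight E x :=
  stmt_13_general E φ hφ
end

section
/- Let G be a directed graph on the vertex set [n]. Every linear G-isometry T of F_q^n factors as T = T_φ ∘ S, where φ is a permutation of [n] which is an automorphism of the expanded canonical form of G (for all u ≠ v, v is reachable from u by a path of length ≥ 1 in G iff φ(v) is so reachable from φ(u)), T_φ is the coordinate permutation map T_φ(x_1,…,x_n) = (x_{φ(1)},…,x_{φ(n)}), and S is a linear map respecting domination (writing S(e_i) = Σ_j α_{ij} e_j, α_{ii} ≠ 0 for all i and α_{ij} ≠ 0 implies i dominates j). That is, GL(n,G)_q = Aut(G̃) ⋉ N(G). -/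
/-!
Reachability is a preorder, and the `G`-weight of `x` counts the elements lying above some point of
the support of `x`. The vectors `T eᵢ` are linearly independent, so any `k` of them involve at least
`k` coordinates, and Hall's theorem yields a permutation `σ` with `(T eᵢ) (σ i) ≠ 0`. Then
`|Ici (σ i)| ≤ weight (T eᵢ) = |Ici i|`, and the two ends have the same sum over `i`; hence equality
holds throughout, and `T eᵢ` is supported in `Ici (σ i)`.

If `i ≤ j` then `eᵢ + eⱼ` weighs at most `|Ici i|`. Were `σ i ≤ σ j` false, `T eᵢ + T eⱼ` would be
nonzero at both `σ i` and `σ j` and would weigh more than that. So `σ` is monotone, hence an order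
automorphism by finiteness, and undoing it turns `T` into a map respecting domination.
-/

open Function Set

theorem exists_injective_apply_ne_zero_of_linearIndependent {ι V R : Type*} [Finite V] [Semiring R]
    [StrongRankCondition R] {v : ι → V → R} (hv : LinearIndependent R v) :
    ∃ f : ι → V, Injective f ∧ ∀ i, v i (f i) ≠ 0 := by
  classical
  have := Fintype.ofFinite V
  let supp (i : ι) : Finset V := {j | v i j ≠ 0}
  suffices hall : ∀ s : Finset ι, s.card ≤ (s.biUnion supp).card by
    simpa [supp] using (Finset.all_card_le_biUnion_card_iff_exists_injective supp).1 hall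
  intro s
  let coordVectors : Finset (V → R) := (s.biUnion supp).image fun j ↦ Pi.single j 1
  have hspan : range (fun i : s ↦ v i) ⊆ Submodule.span R (coordVectors : Set (V → R)) := by
    rintro _ ⟨⟨i, hi⟩, rfl⟩
    change v i ∈ Submodule.span R _
    rw [← Finset.univ_sum_single (v i)]
    refine Submodule.sum_mem _ fun j _ ↦ ?_
    by_cases hj : v i j = 0
    · simp [hj]
    · have hmem : Pi.single j 1 ∈ coordVectors :=
        Finset.mem_image_of_mem _ (Finset.mem_biUnion.2 ⟨i, hi, by simpa [supp] using hj⟩)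
      simpa [← Pi.single_smul] using Submodule.smul_mem _ (v i j) (Submodule.subset_span hmem)
  have hcard : s.card ≤ coordVectors.card := by
    simpa using linearIndependent_le_span' _ (hv.comp _ Subtype.val_injective) _ hspan
  exact hcard.trans Finset.card_image_le

theorem exists_perm_apply_single_ne_zero {V R : Type*} [Finite V] [DecidableEq V] [Ring R]
    [StrongRankCondition R] {T : (V → R) →ₗ[R] (V → R)} (hT : Injective T) :
    ∃ σ : Equiv.Perm V, ∀ i, T (Pi.single i 1) (σ i) ≠ 0 := by
  have hindep := (Pi.linearIndependent_single_one V R).map' T (LinearMap.ker_eq_bot.2 hT)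
  obtain ⟨f, hf, hTf⟩ := exists_injective_apply_ne_zero_of_linearIndependent hindep
  exact ⟨Equiv.ofBijective f (Finite.injective_iff_bijective.1 hf), hTf⟩

theorem monotone_symm_of_monotone {V : Type*} [Finite V] [Preorder V] {σ : Equiv.Perm V}
    (hσ : Monotone σ) : Monotone σ.symm := by
  obtain ⟨k, hk : σ ^ k = σ.symm⟩ : σ⁻¹ ∈ Submonoid.powers σ :=
    mem_powers_iff_mem_zpowers.2 (inv_mem (Subgroup.mem_zpowers σ))
  rw [← hk, ← Equiv.Perm.iterate_eq_pow]
  exact hσ.iterate k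

section OrderWeight

variable {V R : Type*} [Preorder V]

/-- The weight of a vector `x` indexed by a preorder: the number of elements lying above some
element of the support of `x`. For the reachability preorder of a digraph this is the digraph
weight, and for a partial order it is the poset weight of coding theory. -/
noncomputable def orderWeight [Zero R] (x : V → R) : ℕ :=
  (upperClosure (support x) : Set V).ncard

section Zero

variable [Zero R]

theorem orderWeight_single [DecidableEq V] (i : V) {c : R} (hc : c ≠ 0) :
    orderWeight (Pi.single i c) = (Ici i).ncard := by
  rw [orderWeight, Pi.support_single_of_ne hc, upperClosure_singleton, UpperSet.coe_Ici]

theorem Ici_subset_upperClosure_support {x : V → R} {i : V} (hi : x i ≠ 0) :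
    Ici i ⊆ upperClosure (support x) :=
  fun _ hv ↦ ⟨i, hi, hv⟩

variable [Finite V] {x : V → R} {i : V}

theorem orderWeight_eq_zero : orderWeight x = 0 ↔ x = 0 := by
  rw [orderWeight, ncard_eq_zero, UpperSet.coe_eq_empty, upperClosure_eq_top_iff,
    support_eq_empty_iff]

theorem ncard_Ici_le_orderWeight (hi : x i ≠ 0) : (Ici i).ncard ≤ orderWeight x :=
  ncard_le_ncard (Ici_subset_upperClosure_support hi)

theorem orderWeight_le_ncard_Ici (hx : support x ⊆ Ici i) : orderWeight x ≤ (Ici i).ncard :=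
  ncard_le_ncard (upperClosure_min hx (isUpperSet_Ici i))

theorem support_subset_Ici (hi : x i ≠ 0) (hx : orderWeight x ≤ (Ici i).ncard) :
    support x ⊆ Ici i := by
  rw [eq_of_subset_of_ncard_le (Ici_subset_upperClosure_support hi) hx]
  exact subset_upperClosure

end Zero

section Family

variable [Finite V] {v : V → V → R} {σ : Equiv.Perm V}

theorem ncard_Ici_perm_apply [Zero R] (hv : ∀ i, orderWeight (v i) = (Ici i).ncard)
    (hσ : ∀ i, v i (σ i) ≠ 0) (i : V) : (Ici (σ i)).ncard = (Ici i).ncard := by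
  have := Fintype.ofFinite V
  have hle : ∀ j ∈ Finset.univ, (Ici (σ j)).ncard ≤ (Ici j).ncard := fun j _ ↦
    hv j ▸ ncard_Ici_le_orderWeight (hσ j)
  have hsum : ∑ j, (Ici (σ j)).ncard = ∑ j, (Ici j).ncard :=
    Equiv.sum_comp σ fun j ↦ (Ici j).ncard
  exact (Finset.sum_eq_sum_iff_of_le hle).1 hsum i (Finset.mem_univ i)

theorem perm_apply_le_of_apply_ne_zero [Zero R] (hv : ∀ i, orderWeight (v i) = (Ici i).ncard)
    (hσ : ∀ i, v i (σ i) ≠ 0) {i j : V} (hj : v i j ≠ 0) : σ i ≤ j :=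
  support_subset_Ici (hσ i) (by rw [hv, ncard_Ici_perm_apply hv hσ]) hj

theorem monotone_perm_of_apply_ne_zero [AddZeroClass R]
    (hv : ∀ i, orderWeight (v i) = (Ici i).ncard) (hσ : ∀ i, v i (σ i) ≠ 0)
    (hv_add : ∀ i j, i ≤ j → orderWeight (v i + v j) ≤ (Ici i).ncard) : Monotone σ := by
  intro i j hij
  by_contra hσij
  have hσji : ¬ σ j ≤ σ i := fun hσji ↦ by
    have hlt : (Ici (σ i)).ncard < (Ici (σ j)).ncard :=
      ncard_lt_ncard (Ici_ssubset_Ici.2 (lt_of_le_not_ge hσji hσij))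
    rw [ncard_Ici_perm_apply hv hσ, ncard_Ici_perm_apply hv hσ] at hlt
    exact hlt.not_ge (ncard_le_ncard (Ici_subset_Ici.2 hij))
  have hzero {a b : V} (hab : ¬ σ a ≤ b) : v a b = 0 :=
    not_imp_comm.1 (perm_apply_le_of_apply_ne_zero hv hσ) hab
  have hi : (v i + v j) (σ i) ≠ 0 := by simpa [hzero hσji] using hσ i
  have hj : (v i + v j) (σ j) ≠ 0 := by simpa [hzero hσij] using hσ j
  have hle : orderWeight (v i + v j) ≤ (Ici (σ i)).ncard :=
    (hv_add i j hij).trans_eq (ncard_Ici_perm_apply hv hσ i).symm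
  exact hσij (support_subset_Ici hi hle hj)

end Family

section Isometry

variable [Ring R] {T : (V → R) →ₗ[R] (V → R)}

theorem injective_of_orderWeight_apply_eq [Finite V]
    (hT : ∀ x, orderWeight (T x) = orderWeight x) : Injective T := by
  refine (injective_iff_map_eq_zero T).2 fun x hx ↦ ?_
  rw [← orderWeight_eq_zero, ← hT, hx, orderWeight_eq_zero]

variable [DecidableEq V]

theorem orderWeight_apply_single [Nontrivial R] (hT : ∀ x, orderWeight (T x) = orderWeight x)
    (i : V) : orderWeight (T (Pi.single i 1)) = (Ici i).ncard := by
  rw [hT, orderWeight_single i one_ne_zero]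

theorem orderWeight_apply_single_add_le [Finite V] (hT : ∀ x, orderWeight (T x) = orderWeight x)
    {i j : V} (hij : i ≤ j) :
    orderWeight (T (Pi.single i 1) + T (Pi.single j 1)) ≤ (Ici i).ncard := by
  rw [← map_add, hT]
  have hi : support (Pi.single i (1 : R)) ⊆ Ici i :=
    Pi.support_single_subset.trans (singleton_subset_iff.2 self_mem_Ici)
  have hj : support (Pi.single j (1 : R)) ⊆ Ici i :=
    Pi.support_single_subset.trans (singleton_subset_iff.2 hij)
  exact orderWeight_le_ncard_Ici ((support_add _ _).trans (union_subset hi hj))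

end Isometry

end OrderWeight

theorem stmt_14_general {V R : Type*} [Finite V] [DecidableEq V] [Preorder V] [Ring R]
    [StrongRankCondition R] (T : (V → R) →ₗ[R] (V → R))
    (hT : ∀ x, orderWeight (T x) = orderWeight x) :
    ∃ (φ : V ≃o V) (S : (V → R) →ₗ[R] (V → R)),
      (∀ i, S (Pi.single i 1) i ≠ 0) ∧
      (∀ i j, S (Pi.single i 1) j ≠ 0 → i ≤ j) ∧
      (∀ x i, T x i = S x (φ i)) := by
  have := nontrivial_of_invariantBasisNumber R
  obtain ⟨σ, hσ⟩ := exists_perm_apply_single_ne_zero (injective_of_orderWeight_apply_eq hT)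
  have hT_single := orderWeight_apply_single hT
  have hσ_mono : Monotone σ :=
    monotone_perm_of_apply_ne_zero hT_single hσ fun _ _ ↦ orderWeight_apply_single_add_le hT
  let ψ : V ≃o V := σ.toOrderIso hσ_mono (monotone_symm_of_monotone hσ_mono)
  refine ⟨ψ.symm, LinearMap.funLeft R R σ ∘ₗ T, hσ, fun i j hij ↦ ?_, fun x i ↦ ?_⟩
  · exact ψ.le_iff_le.1 (perm_apply_le_of_apply_ne_zero hT_single hσ hij)
  · exact congrArg (T x) (σ.apply_symm_apply i).symm

/-- The preorder in which `u ≤ v` means that `u` dominates `v`, so that the closure of a set of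
vertices is its upper closure. -/
abbrev reachabilityPreorder {V : Type*} (E : V → V → Prop) : Preorder V where
  le := Relation.ReflTransGen E
  le_refl _ := .refl
  le_trans _ _ _ := .trans

theorem transGen_iff_reflTransGen_of_ne {V : Type*} {E : V → V → Prop} {u v : V} (huv : u ≠ v) :
    Relation.TransGen E u v ↔ Relation.ReflTransGen E u v := by
  simp [Relation.reflTransGen_iff_eq_or_transGen, huv.symm]

theorem transGen_iff_transGen_apply {V W : Type*} {E : V → V → Prop} {E' : W → W → Prop}
    (φ : Relation.ReflTransGen E ↪r Relation.ReflTransGen E') {u v : V} (huv : u ≠ v) :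
    Relation.TransGen E u v ↔ Relation.TransGen E' (φ u) (φ v) := by
  rw [transGen_iff_reflTransGen_of_ne huv, transGen_iff_reflTransGen_of_ne (φ.injective.ne huv),
    φ.map_rel_iff]

/-- every linear `G`-isometry `T` of `F_q^n` factors as `T = T_φ ∘ S`, where
`φ` is a permutation of `[n]` which is an automorphism of the expanded canonical form of
`G`, `T_φ` is the coordinate permutation map `T_φ(x)_i = x_{φ(i)}`, and `S` is a linear map
respecting domination; that is, `GL(n,G)_q = Aut(G̃) ⋉ N(G)`. -/
theorem stmt_14 {n : ℕ} (hn : 1 ≤ n) {F : Type*} [Field F] [Fintype F]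
    (E : Fin n → Fin n → Prop) (hE : Irreflexive E)
    (T : (Fin n → F) →ₗ[F] (Fin n → F)) (hTbij : Function.Bijective T)
    (hTiso : ∀ x : Fin n → F, gweight E (T x) = gweight E x) :
    ∃ (φ : Equiv.Perm (Fin n)) (S : (Fin n → F) →ₗ[F] (Fin n → F)),
      (∀ u v : Fin n, u ≠ v →
        (Relation.TransGen E u v ↔ Relation.TransGen E (φ u) (φ v))) ∧
      (∀ i : Fin n, S (Pi.single i 1) i ≠ 0) ∧
      (∀ i j : Fin n, S (Pi.single i 1) j ≠ 0 → Relation.ReflTransGen E i j) ∧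
      (∀ (x : Fin n → F) (i : Fin n), T x i = S x (φ i)) := by
  obtain ⟨φ, S, hS⟩ := @stmt_14_general _ _ _ _ (reachabilityPreorder E) _ _ T hTiso
  exact ⟨φ.toEquiv, S, fun _ _ ↦ transGen_iff_transGen_apply φ.toRelEmbedding, hS⟩
end

section
/- Let G be a directed graph on [n] whose reduced canonical form determines a hierarchical poset P_G. Then the group of linear G-isometries of F_q^n acts transitively on the spheres of (F_q^n, d_G) — i.e., for all x, y ∈ F_q^n with w_G(x) = w_G(y) there is a linear G-isometry T with T(x) = y — if and only if G satisfies the Unique Decomposition Property. -/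
/-- `u` dominates `v`: `v` is reachable from `u` by a directed path. -/
def gdom {n : ℕ} (E : Fin n → Fin n → Prop) : Fin n → Fin n → Prop :=
  Relation.ReflTransGen E

/-- Clique equivalence: `u` and `v` dominate each other. -/
def cliqueSetoid {n : ℕ} (E : Fin n → Fin n → Prop) : Setoid (Fin n) where
  r u v := gdom E u v ∧ gdom E v u
  iseqv := ⟨fun _ => ⟨Relation.ReflTransGen.refl, Relation.ReflTransGen.refl⟩,
    fun h => ⟨h.2, h.1⟩,
    fun h₁ h₂ => ⟨h₁.1.trans h₂.1, h₂.2.trans h₁.2⟩⟩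

/-- The set of classes `V′` of the reduced canonical form of `G`. -/
def Vred {n : ℕ} (E : Fin n → Fin n → Prop) : Type :=
  Quotient (cliqueSetoid E)

/-- The projection `π` from vertices to their classes. -/
def gpi {n : ℕ} (E : Fin n → Fin n → Prop) (v : Fin n) : Vred E :=
  Quotient.mk (cliqueSetoid E) v

/-- The order of the poset `P_G` on the classes: `π(v) ⪯ π(u)` iff `u` dominates `v`. -/
def ple {n : ℕ} (E : Fin n → Fin n → Prop) (a b : Vred E) : Prop :=
  ∃ u v : Fin n, gpi E v = a ∧ gpi E u = b ∧ gdom E u v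

/-- The weight `L(a)` of a class: the number of vertices in it. -/
noncomputable def lwt {n : ℕ} (E : Fin n → Fin n → Prop) (a : Vred E) : ℕ :=
  {v : Fin n | gpi E v = a}.ncard

/-- The height of `a` in `P_G`: the maximum cardinality of a chain of `P_G` having `a`
as its maximal element. -/
noncomputable def hgt {n : ℕ} (E : Fin n → Fin n → Prop) (a : Vred E) : ℕ :=
  sSup {k | ∃ c : Set (Vred E), c.ncard = k ∧ a ∈ c ∧ (∀ x ∈ c, ple E x a) ∧
    ∀ x ∈ c, ∀ y ∈ c, ple E x y ∨ ple E y x}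

/-- `P_G` is hierarchical: every element of height `i > 1` lies strictly above every
element of height `i − 1`. -/
def Hierarchical {n : ℕ} (E : Fin n → Fin n → Prop) : Prop :=
  ∀ a b : Vred E, 1 < hgt E a → hgt E b + 1 = hgt E a → (ple E b a ∧ b ≠ a)

/-- `G` satisfies the Unique Decomposition Property: any two subsets of a level of `P_G`
with the same total `L`-weight are matched by an `L`-preserving bijection. -/
def UDP {n : ℕ} (E : Fin n → Fin n → Prop) : Prop :=
  ∀ (i : ℕ) (S S' : Set (Vred E)),
    S ⊆ {a | hgt E a = i} → S' ⊆ {a | hgt E a = i} →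
    (∑ᶠ a ∈ S, lwt E a) = (∑ᶠ a ∈ S', lwt E a) →
    ∃ g : Vred E → Vred E, Set.BijOn g S S' ∧ ∀ a ∈ S, lwt E (g a) = lwt E a

/-!
In a hierarchical poset a word whose highest nonzero coordinates lie on level `i` has weight
`L(levels below i) + L(A)`, where `A` is the set of classes of level `i` that it meets.

If `G`-isometries act transitively, let `T` map the indicator of `S` to that of `S'`, where `S` and
`S'` lie on level `i` and have equal total weight. By the weight formula `T` preserves `L(A)`, and
`L(A ∪ B) = L(A) + L(B)` only for disjoint `A` and `B`, so `T` keeps disjoint level supports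
disjoint. Hence `T` maps the indicators of the classes of level `i` to words with disjoint
nonempty level supports; by counting these are singletons, which gives a weight-preserving
permutation of the level that takes `S` to `S'`.

Conversely, transvections clear all coordinates below the top level of a word. Given UDP, two words
of equal weight then meet, up to a permutation of classes preserving height and weight, the same
classes, and a linear automorphism of each block takes the one to the other.
-/

section Fibers

variable {α β γ : Type*}

theorem ncard_preimage_eq_finsum_ncard_fiber [Finite α] [Finite β] (f : α → β) (s : Set β) :
    (f ⁻¹' s).ncard = ∑ᶠ b ∈ s, {a | f a = b}.ncard := by
  have hdisj : s.PairwiseDisjoint fun b => {a | f a = b} := fun b _ c _ hbc =>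
    Set.disjoint_left.2 fun _ hb hc => hbc (hb.symm.trans hc)
  have hunion : f ⁻¹' s = ⋃ b ∈ s, {a | f a = b} := by ext; simp
  rw [hunion, s.toFinite.ncard_biUnion (fun _ _ => Set.toFinite _) hdisj]

theorem exists_equiv_comp_eq_of_ncard_fiber_eq [Finite α] [Finite β] (f : α → γ) (g : β → γ)
    (h : ∀ c, {a | f a = c}.ncard = {b | g b = c}.ncard) : ∃ e : α ≃ β, ∀ a, g (e a) = f a := by
  have hfiber (c : γ) : Nonempty ({a // f a = c} ≃ {b // g b = c}) := Finite.card_eq.1 (h c)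
  exact ⟨Equiv.ofFiberEquiv fun c => (hfiber c).some, Equiv.ofFiberEquiv_map _⟩

theorem exists_perm_image_eq_of_bijOn [Finite α] {f : α → γ} {g : α → α} {s t : Set α}
    (hg : Set.BijOn g s t) (hf : ∀ a ∈ s, f (g a) = f a) :
    ∃ σ : Equiv.Perm α, (∀ a, f (σ a) = f a) ∧ σ '' s = t := by
  have hin (c : γ) : ({a | f a = c} ∩ s).ncard = ({a | f a = c} ∩ t).ncard := by
    rw [← (hg.injOn.mono Set.inter_subset_right).ncard_image]
    congr 1
    ext b
    constructor
    · rintro ⟨a, ⟨rfl, ha⟩, rfl⟩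
      exact ⟨hf a ha, hg.mapsTo ha⟩
    · rintro ⟨rfl, hb⟩
      obtain ⟨a, ha, rfl⟩ := hg.surjOn hb
      exact ⟨a, ⟨(hf a ha).symm, ha⟩, rfl⟩
  have hout (c : γ) : ({a | f a = c} \ s).ncard = ({a | f a = c} \ t).ncard := by
    have hs := Set.ncard_inter_add_ncard_sdiff_eq_ncard {a | f a = c} s
    have ht := Set.ncard_inter_add_ncard_sdiff_eq_ncard {a | f a = c} t
    have := hin c
    omega
  obtain ⟨σ, hσ⟩ := exists_equiv_comp_eq_of_ncard_fiber_eq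
    (fun a => (f a, a ∈ s)) (fun a => (f a, a ∈ t)) fun ⟨c, p⟩ => by
      by_cases hp : p
      · simpa [hp, Set.inter_def] using hin c
      · simpa [hp, Set.sdiff_eq] using! hout c
  simp only [Prod.mk.injEq, eq_iff_iff] at hσ
  refine ⟨σ, fun a => (hσ a).1, ?_⟩
  ext b
  rw [σ.image_eq_preimage_symm, Set.mem_preimage, ← (hσ _).2, σ.apply_symm_apply]

end Fibers

theorem exists_linearEquiv_apply_eq {K V : Type*} [DivisionRing K] [AddCommGroup V] [Module K V]
    {x y : V} (h : x = 0 ↔ y = 0) : ∃ e : V ≃ₗ[K] V, e x = y := by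
  by_cases hx : x = 0
  · exact ⟨.refl K V, by simp [hx, h.1 hx]⟩
  · have hy : y ≠ 0 := mt h.2 hx
    obtain ⟨e, he⟩ := Submodule.exists_linearEquiv_restrict_eq
      ((LinearEquiv.toSpanNonzeroSingleton K V x hx).symm ≪≫ₗ
        LinearEquiv.toSpanNonzeroSingleton K V y hy)
    exact ⟨e, by
      simpa [LinearEquiv.coord_self] using (he ⟨x, Submodule.mem_span_singleton_self x⟩).symm⟩

section Poset

variable {n : ℕ} {E : Fin n → Fin n → Prop}

instance : Finite (Vred E) := inferInstanceAs (Finite (Quotient (cliqueSetoid E)))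

theorem gpi_surjective : Function.Surjective (gpi E) := Quotient.mk_surjective

theorem gpi_eq_gpi_iff {u v : Fin n} : gpi E u = gpi E v ↔ gdom E u v ∧ gdom E v u :=
  Quotient.eq (r := cliqueSetoid E)

theorem ple_gpi_gpi_iff {u v : Fin n} : ple E (gpi E v) (gpi E u) ↔ gdom E u v := by
  constructor
  · rintro ⟨u', v', hv, hu, h⟩
    exact ((gpi_eq_gpi_iff.1 hu).2.trans h).trans (gpi_eq_gpi_iff.1 hv).1
  · exact fun h => ⟨u, v, rfl, rfl, h⟩

/-- The poset `P_G`. -/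
instance : PartialOrder (Vred E) where
  le := ple E
  le_refl := gpi_surjective.forall.2 fun _ => ple_gpi_gpi_iff.2 .refl
  le_trans := gpi_surjective.forall₃.2 fun u v w => by
    simp only [ple_gpi_gpi_iff]
    exact fun huv hvw => hvw.trans huv
  le_antisymm := gpi_surjective.forall₂.2 fun u v => by
    simp only [ple_gpi_gpi_iff, gpi_eq_gpi_iff]
    exact fun huv hvu => ⟨hvu, huv⟩

theorem gpi_le_gpi_iff {u v : Fin n} : gpi E v ≤ gpi E u ↔ gdom E u v := ple_gpi_gpi_iff

theorem isGreatest_hgt (a : Vred E) :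
    IsGreatest {k | ∃ c : Set (Vred E), IsGreatest c a ∧ IsChain (· ≤ ·) c ∧ c.ncard = k}
      (hgt E a) := by
  have hset : {k | ∃ c : Set (Vred E), IsGreatest c a ∧ IsChain (· ≤ ·) c ∧ c.ncard = k} =
      {k | ∃ c : Set (Vred E), c.ncard = k ∧ a ∈ c ∧ (∀ x ∈ c, ple E x a) ∧
        ∀ x ∈ c, ∀ y ∈ c, ple E x y ∨ ple E y x} := by
    ext k
    refine exists_congr fun c => ⟨fun ⟨hac, hc, hk⟩ => ?_, fun ⟨hk, hac, hle, hc⟩ => ?_⟩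
    · exact ⟨hk, hac.1, fun x hx => hac.2 hx, fun x hx y hy => hc.total hx hy⟩
    · exact ⟨⟨hac, fun x hx => hle x hx⟩, fun x hx y hy _ => hc x hx y hy, hk⟩
  have hbdd : BddAbove
      {k | ∃ c : Set (Vred E), IsGreatest c a ∧ IsChain (· ≤ ·) c ∧ c.ncard = k} :=
    ⟨Nat.card (Vred E), by rintro _ ⟨c, -, -, rfl⟩; exact Set.ncard_le_card c⟩
  rw [hgt, ← hset]
  exact ⟨Nat.sSup_mem ⟨1, {a}, isGreatest_singleton, IsChain.singleton, Set.ncard_singleton a⟩ hbdd,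
    fun k hk => le_csSup hbdd hk⟩

theorem hgt_pos (a : Vred E) : 0 < hgt E a :=
  (isGreatest_hgt a).2 ⟨{a}, isGreatest_singleton, IsChain.singleton, Set.ncard_singleton a⟩

theorem hgt_strictMono : StrictMono (hgt E) := by
  intro a b hab
  obtain ⟨c, ⟨-, hle⟩, hc, hcard⟩ := (isGreatest_hgt a).1
  have hlt : ∀ x ∈ c, x < b := fun x hx => (hle hx).trans_lt hab
  have hb : b ∉ c := fun h => (hlt b h).false
  have hcard' := Set.ncard_insert_of_notMem hb
  have := (isGreatest_hgt b).2 ⟨insert b c,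
    ⟨Set.mem_insert b c, by rintro x (rfl | hx); exacts [le_rfl, (hlt x hx).le]⟩,
    hc.insert fun x hx _ => .inr (hlt x hx).le, rfl⟩
  omega

theorem exists_lt_hgt_add_one_eq {a : Vred E} (ha : 1 < hgt E a) :
    ∃ b < a, hgt E b + 1 = hgt E a := by
  obtain ⟨c, ⟨hac, hle⟩, hc, hcard⟩ := (isGreatest_hgt a).1
  have hcard' := Set.ncard_sdiff_singleton_add_one hac
  obtain ⟨b, hb⟩ := (Set.toFinite (c \ {a})).exists_maximal
    ((Set.ncard_pos (Set.toFinite _)).1 (by omega))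
  have hc' : IsChain (· ≤ ·) (c \ {a}) := hc.mono Set.sdiff_subset
  have hgreatest : IsGreatest (c \ {a}) b :=
    ⟨hb.prop, fun x hx => (hc'.total hx hb.prop).elim id (hb.le_of_ge hx)⟩
  have hba : b < a := (hle hb.prop.1).lt_of_ne hb.prop.2
  have hlower := (isGreatest_hgt b).2 ⟨c \ {a}, hgreatest, hc', rfl⟩
  have hupper := hgt_strictMono hba
  exact ⟨b, hba, by omega⟩

theorem Hierarchical.lt_iff_hgt_lt (hh : Hierarchical E) {a b : Vred E} :
    a < b ↔ hgt E a < hgt E b := by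
  refine ⟨fun h => hgt_strictMono h, fun h => ?_⟩
  induction hk : hgt E b generalizing b with
  | zero => omega
  | succ k ih =>
    have := hgt_pos a
    by_cases hab : hgt E a + 1 = hgt E b
    · exact lt_of_le_of_ne (hh b a (by omega) hab).1 (hh b a (by omega) hab).2
    · obtain ⟨c, hcb, hc⟩ := exists_lt_hgt_add_one_eq (a := b) (by omega)
      exact (ih (by omega) (by omega)).trans hcb

end Poset

section Weight

variable {n : ℕ} (E : Fin n → Fin n → Prop)

/-- The total weight `∑ L(a)` over `a ∈ A` of a set `A` of classes, encoded as the number of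
vertices whose class lies in `A`. -/
noncomputable def blockWeight (A : Set (Vred E)) : ℕ := (gpi E ⁻¹' A).ncard

variable {E}

theorem finsum_lwt_eq_blockWeight (A : Set (Vred E)) :
    ∑ᶠ a ∈ A, lwt E a = blockWeight E A :=
  (ncard_preimage_eq_finsum_ncard_fiber (gpi E) A).symm

theorem blockWeight_union {A B : Set (Vred E)} (h : Disjoint A B) :
    blockWeight E (A ∪ B) = blockWeight E A + blockWeight E B :=
  Set.ncard_union_eq (h.preimage _)

theorem blockWeight_mono {A B : Set (Vred E)} (h : A ⊆ B) : blockWeight E A ≤ blockWeight E B :=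
  Set.ncard_le_ncard (Set.preimage_mono h)

theorem blockWeight_eq_zero_iff {A : Set (Vred E)} : blockWeight E A = 0 ↔ A = ∅ := by
  rw [blockWeight, Set.ncard_eq_zero, Set.preimage_eq_empty_iff, gpi_surjective.range_eq,
    Set.disjoint_univ]

theorem disjoint_of_blockWeight_add_le {A B : Set (Vred E)}
    (h : blockWeight E A + blockWeight E B ≤ blockWeight E (A ∪ B)) : Disjoint A B := by
  have hunion := Set.ncard_union_add_ncard_inter (gpi E ⁻¹' A) (gpi E ⁻¹' B)
  rw [← Set.preimage_union, ← Set.preimage_inter] at hunion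
  rw [Set.disjoint_iff_inter_eq_empty, ← blockWeight_eq_zero_iff]
  simp only [blockWeight] at h ⊢
  omega

theorem blockWeight_strictMono : StrictMono (blockWeight E) := fun A B h => by
  have hdisj : Disjoint A (B \ A) := Set.disjoint_sdiff_right
  have hadd := blockWeight_union hdisj
  rw [Set.union_sdiff_cancel h.subset] at hadd
  have hpos : blockWeight E (B \ A) ≠ 0 := mt blockWeight_eq_zero_iff.1
    (Set.nonempty_of_ssubset h).ne_empty
  omega

variable (E) in
/-- The set of classes met by the support of a word. -/
def classSupport {M : Type*} [Zero M] (x : Fin n → M) : Set (Vred E) :=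
  gpi E '' Function.support x

variable (E) in
/-- The classes of the `i`-th level of `P_G` met by the support of a word. -/
def levelSupport {M : Type*} [Zero M] (i : ℕ) (x : Fin n → M) : Set (Vred E) :=
  classSupport E x ∩ {a | hgt E a = i}

theorem classSupport_indicator {M : Type*} [Zero M] (A : Set (Vred E)) (x : Fin n → M) :
    classSupport E ((gpi E ⁻¹' A).indicator x) = classSupport E x ∩ A := by
  rw [classSupport, Set.support_indicator, Set.inter_comm, Set.image_inter_preimage,
    classSupport]

theorem gclosure_eq_preimage_lowerClosure (X : Set (Fin n)) :
    gclosure E X = gpi E ⁻¹' lowerClosure (gpi E '' X) := by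
  ext v
  simp only [Set.mem_preimage, SetLike.mem_coe, mem_lowerClosure, Set.exists_mem_image,
    gpi_le_gpi_iff]
  rfl

variable {F : Type*} [Field F]

theorem gweight_eq_blockWeight (x : Fin n → F) :
    gweight E x = blockWeight E (lowerClosure (classSupport E x)) :=
  congrArg Set.ncard (gclosure_eq_preimage_lowerClosure _)

theorem gweight_zero : gweight E (0 : Fin n → F) = 0 := by
  simp [gweight_eq_blockWeight, classSupport, blockWeight]

theorem gweight_eq_zero_iff {x : Fin n → F} : gweight E x = 0 ↔ x = 0 := by
  refine ⟨fun h => ?_, fun h => h ▸ gweight_zero⟩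
  rw [gweight_eq_blockWeight, blockWeight_eq_zero_iff] at h
  have hempty := Set.subset_empty_iff.1 (subset_lowerClosure.trans h.subset)
  rwa [classSupport, Set.image_eq_empty, Function.support_eq_empty_iff] at hempty

theorem blockWeight_lowerClosure_le_iff {A : Set (Vred E)} (hh : Hierarchical E) {i : ℕ} :
    blockWeight E (lowerClosure A) ≤ blockWeight E {a | hgt E a ≤ i} ↔ ∀ a ∈ A, hgt E a ≤ i := by
  refine ⟨fun h a ha => ?_, fun h => blockWeight_mono ?_⟩
  · by_contra! hai
    refine h.not_gt (blockWeight_strictMono ⟨fun b hb => ?_, fun hsub => ?_⟩)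
    · exact ⟨a, ha, (hh.lt_iff_hgt_lt.2 (lt_of_le_of_lt hb hai)).le⟩
    · exact hai.not_ge (hsub (subset_lowerClosure ha))
  · rintro b ⟨a, ha, hba⟩
    exact (hgt_strictMono.monotone hba).trans (h a ha)

theorem gweight_le_blockWeight_iff (hh : Hierarchical E) {i : ℕ} {x : Fin n → F} :
    gweight E x ≤ blockWeight E {a | hgt E a ≤ i} ↔ ∀ a ∈ classSupport E x, hgt E a ≤ i := by
  rw [gweight_eq_blockWeight, blockWeight_lowerClosure_le_iff hh]

theorem lowerClosure_eq_hgt_lt_union (hh : Hierarchical E) {A : Set (Vred E)} {i : ℕ}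
    (hA : ∀ a ∈ A, hgt E a ≤ i) (hne : (A ∩ {a | hgt E a = i}).Nonempty) :
    (lowerClosure A : Set (Vred E)) = {a | hgt E a < i} ∪ (A ∩ {a | hgt E a = i}) := by
  obtain ⟨c, hcA, hci⟩ := hne
  ext b
  constructor
  · rintro ⟨a, ha, hba⟩
    rcases hba.lt_or_eq with hlt | rfl
    · exact .inl ((hgt_strictMono hlt).trans_le (hA a ha))
    · exact (hA b ha).lt_or_eq.imp id fun hb => ⟨ha, hb⟩
  · rintro (hb | ⟨hb, -⟩)
    · exact ⟨c, hcA, (hh.lt_iff_hgt_lt.2 (lt_of_lt_of_eq hb hci.symm)).le⟩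
    · exact subset_lowerClosure hb

theorem gweight_eq_add_blockWeight_levelSupport (hh : Hierarchical E) {i : ℕ}
    {x : Fin n → F} (hx : ∀ a ∈ classSupport E x, hgt E a ≤ i)
    (hne : (levelSupport E i x).Nonempty) :
    gweight E x = blockWeight E {a | hgt E a < i} + blockWeight E (levelSupport E i x) := by
  rw [gweight_eq_blockWeight, lowerClosure_eq_hgt_lt_union hh hx hne, blockWeight_union,
    levelSupport]
  exact Set.disjoint_left.2 fun a ha hai => ha.ne hai.2

theorem gweight_le_of_levelSupport_eq_empty {i : ℕ} {x : Fin n → F}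
    (hx : ∀ a ∈ classSupport E x, hgt E a ≤ i) (hempty : levelSupport E i x = ∅) :
    gweight E x ≤ blockWeight E {a | hgt E a < i} := by
  rw [gweight_eq_blockWeight]
  refine blockWeight_mono ?_
  rintro b ⟨a, ha, hba⟩
  have hai : hgt E a ≠ i := fun hai => Set.eq_empty_iff_forall_notMem.1 hempty a ⟨ha, hai⟩
  exact (hgt_strictMono.monotone hba).trans_lt ((hx a ha).lt_of_ne hai)

-- The maximum covers words with empty level support: their weight is at most the second term.
theorem max_gweight_eq_add_blockWeight_levelSupport (hh : Hierarchical E) {i : ℕ}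
    {x : Fin n → F} (hx : ∀ a ∈ classSupport E x, hgt E a ≤ i) :
    max (gweight E x) (blockWeight E {a | hgt E a < i}) =
      blockWeight E {a | hgt E a < i} + blockWeight E (levelSupport E i x) := by
  rcases (levelSupport E i x).eq_empty_or_nonempty with hempty | hne
  · rw [max_eq_right (gweight_le_of_levelSupport_eq_empty hx hempty), hempty,
      blockWeight_eq_zero_iff.2 rfl, add_zero]
  · rw [gweight_eq_add_blockWeight_levelSupport hh hx hne, max_eq_left (Nat.le_add_right _ _)]

theorem blockWeight_levelSupport_eq_of_gweight_eq (hh : Hierarchical E) {i : ℕ}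
    {x y : Fin n → F} (hx : ∀ a ∈ classSupport E x, hgt E a ≤ i)
    (hy : ∀ a ∈ classSupport E y, hgt E a ≤ i) (h : gweight E x = gweight E y) :
    blockWeight E (levelSupport E i x) = blockWeight E (levelSupport E i y) := by
  have hmaxx := max_gweight_eq_add_blockWeight_levelSupport hh hx
  have hmaxy := max_gweight_eq_add_blockWeight_levelSupport hh hy
  rw [h] at hmaxx
  omega

end Weight

section Transitive

variable {n : ℕ} {E : Fin n → Fin n → Prop}

theorem classSupport_add_subset {M : Type*} [AddZeroClass M] (x y : Fin n → M) :
    classSupport E (x + y) ⊆ classSupport E x ∪ classSupport E y := by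
  rw [classSupport, classSupport, classSupport, ← Set.image_union]
  exact Set.image_mono (Function.support_add x y)

theorem levelSupport_add_subset {M : Type*} [AddZeroClass M] (i : ℕ) (x y : Fin n → M) :
    levelSupport E i (x + y) ⊆ levelSupport E i x ∪ levelSupport E i y := by
  rw [levelSupport, levelSupport, levelSupport, ← Set.union_inter_distrib_right]
  exact Set.inter_subset_inter_left _ (classSupport_add_subset x y)

theorem levelSupport_add_of_disjoint {M : Type*} [AddZeroClass M] {i : ℕ} {x y : Fin n → M}
    (h : Disjoint (levelSupport E i x) (levelSupport E i y)) :
    levelSupport E i (x + y) = levelSupport E i x ∪ levelSupport E i y := by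
  have hzero (v : Fin n) (hv : hgt E (gpi E v) = i) : x v = 0 ∨ y v = 0 := by
    by_contra! hxy
    exact Set.disjoint_left.1 h ⟨⟨v, hxy.1, rfl⟩, hv⟩ ⟨⟨v, hxy.2, rfl⟩, hv⟩
  refine (levelSupport_add_subset i x y).antisymm ?_
  rintro _ (⟨⟨v, hxv, rfl⟩, hv⟩ | ⟨⟨v, hyv, rfl⟩, hv⟩)
  · have hyv := (hzero v hv).resolve_left hxv
    exact ⟨⟨v, by simpa [hyv] using hxv, rfl⟩, hv⟩
  · have hxv := (hzero v hv).resolve_right hyv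
    exact ⟨⟨v, by simpa [hxv] using hyv, rfl⟩, hv⟩

variable (E) in
/-- The `0`-`1` word supported exactly on the vertices whose class lies in `S`. -/
noncomputable def blockIndicator (M : Type*) [Zero M] [One M] (S : Set (Vred E)) : Fin n → M :=
  (gpi E ⁻¹' S).indicator 1

section blockIndicator

variable {M : Type*} [MulZeroOneClass M] [Nontrivial M]

theorem classSupport_blockIndicator (S : Set (Vred E)) :
    classSupport E (blockIndicator E M S) = S := by
  rw [blockIndicator, classSupport_indicator, classSupport, Function.support_one, Set.image_univ,
    gpi_surjective.range_eq, Set.univ_inter]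

theorem levelSupport_blockIndicator {i : ℕ} {S : Set (Vred E)} (hS : S ⊆ {a | hgt E a = i}) :
    levelSupport E i (blockIndicator E M S) = S := by
  rw [levelSupport, classSupport_blockIndicator, Set.inter_eq_left.2 hS]

end blockIndicator

theorem blockIndicator_insert {M : Type*} [AddZeroClass M] [One M] {a : Vred E}
    {S : Set (Vred E)} (ha : a ∉ S) :
    blockIndicator E M (insert a S) = blockIndicator E M {a} + blockIndicator E M S := by
  rw [blockIndicator, Set.insert_eq, Set.preimage_union]
  exact Set.indicator_union_of_disjoint ((Set.disjoint_singleton_left.2 ha).preimage _) _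

variable {F : Type*} [Field F]

theorem hgt_le_of_mem_classSupport_blockIndicator {i : ℕ} {S : Set (Vred E)}
    (hS : S ⊆ {a | hgt E a = i}) : ∀ a ∈ classSupport E (blockIndicator E F S), hgt E a ≤ i := by
  rw [classSupport_blockIndicator]
  exact fun a ha => (hS ha).le

theorem gweight_blockIndicator_eq_of_blockWeight_eq (hh : Hierarchical E) {i : ℕ}
    {S S' : Set (Vred E)} (hS : S ⊆ {a | hgt E a = i}) (hS' : S' ⊆ {a | hgt E a = i})
    (h : blockWeight E S = blockWeight E S') :
    gweight E (blockIndicator E F S) = gweight E (blockIndicator E F S') := by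
  have hempty : S = ∅ ↔ S' = ∅ := by rw [← blockWeight_eq_zero_iff, h, blockWeight_eq_zero_iff]
  rcases S.eq_empty_or_nonempty with hSe | hne
  · rw [hempty.1 hSe, hSe]
  have hne' : S'.Nonempty := Set.nonempty_iff_ne_empty.2 (mt hempty.2 hne.ne_empty)
  have hformula {A : Set (Vred E)} (hA : A ⊆ {a | hgt E a = i}) (hA' : A.Nonempty) :
      gweight E (blockIndicator E F A) = blockWeight E {a | hgt E a < i} + blockWeight E A := by
    rw [gweight_eq_add_blockWeight_levelSupport hh (hgt_le_of_mem_classSupport_blockIndicator hA),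
      levelSupport_blockIndicator hA]
    rwa [levelSupport_blockIndicator hA]
  rw [hformula hS hne, hformula hS' hne', h]

variable {T : (Fin n → F) →+ (Fin n → F)}

theorem hgt_le_of_mem_classSupport_map (hh : Hierarchical E)
    (hT : ∀ z, gweight E (T z) = gweight E z) {i : ℕ} {x : Fin n → F}
    (hx : ∀ a ∈ classSupport E x, hgt E a ≤ i) : ∀ a ∈ classSupport E (T x), hgt E a ≤ i := by
  rwa [← gweight_le_blockWeight_iff hh, hT, gweight_le_blockWeight_iff hh]

theorem blockWeight_levelSupport_map (hh : Hierarchical E)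
    (hT : ∀ z, gweight E (T z) = gweight E z) {i : ℕ} {x : Fin n → F}
    (hx : ∀ a ∈ classSupport E x, hgt E a ≤ i) :
    blockWeight E (levelSupport E i (T x)) = blockWeight E (levelSupport E i x) :=
  blockWeight_levelSupport_eq_of_gweight_eq hh (hgt_le_of_mem_classSupport_map hh hT hx) hx (hT x)

theorem levelSupport_map_eq_empty_iff (hh : Hierarchical E)
    (hT : ∀ z, gweight E (T z) = gweight E z) {i : ℕ} {x : Fin n → F}
    (hx : ∀ a ∈ classSupport E x, hgt E a ≤ i) :
    levelSupport E i (T x) = ∅ ↔ levelSupport E i x = ∅ := by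
  rw [← blockWeight_eq_zero_iff, blockWeight_levelSupport_map hh hT hx, blockWeight_eq_zero_iff]

theorem disjoint_levelSupport_map (hh : Hierarchical E)
    (hT : ∀ z, gweight E (T z) = gweight E z) {i : ℕ} {x y : Fin n → F}
    (hx : ∀ a ∈ classSupport E x, hgt E a ≤ i) (hy : ∀ a ∈ classSupport E y, hgt E a ≤ i)
    (h : Disjoint (levelSupport E i x) (levelSupport E i y)) :
    Disjoint (levelSupport E i (T x)) (levelSupport E i (T y)) := by
  have hxy : ∀ a ∈ classSupport E (x + y), hgt E a ≤ i := fun a ha =>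
    (classSupport_add_subset x y ha).elim (hx a) (hy a)
  refine disjoint_of_blockWeight_add_le (le_trans (le_of_eq ?_)
    (blockWeight_mono (levelSupport_add_subset i (T x) (T y))))
  rw [blockWeight_levelSupport_map hh hT hx, blockWeight_levelSupport_map hh hT hy,
    ← blockWeight_union h, ← levelSupport_add_of_disjoint h, ← map_add,
    blockWeight_levelSupport_map hh hT hxy]

theorem eq_of_mem_levelSupport_map_blockIndicator (hh : Hierarchical E)
    (hT : ∀ z, gweight E (T z) = gweight E z) {i : ℕ} {a b c : Vred E} (ha : hgt E a = i)
    (hb : hgt E b = i) (hca : c ∈ levelSupport E i (T (blockIndicator E F {a})))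
    (hcb : c ∈ levelSupport E i (T (blockIndicator E F {b}))) : a = b := by
  by_contra hab
  have ha' : {a} ⊆ {d | hgt E d = i} := Set.singleton_subset_iff.2 ha
  have hb' : {b} ⊆ {d | hgt E d = i} := Set.singleton_subset_iff.2 hb
  refine Set.disjoint_left.1 (disjoint_levelSupport_map hh hT
    (hgt_le_of_mem_classSupport_blockIndicator ha')
    (hgt_le_of_mem_classSupport_blockIndicator hb') ?_) hca hcb
  rwa [levelSupport_blockIndicator ha', levelSupport_blockIndicator hb', Set.disjoint_singleton]

theorem exists_injOn_levelSupport_map_eq_singleton (hh : Hierarchical E)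
    (hT : ∀ z, gweight E (T z) = gweight E z) (i : ℕ) :
    ∃ g : Vred E → Vred E, Set.InjOn g {a | hgt E a = i} ∧
      ∀ a, hgt E a = i → levelSupport E i (T (blockIndicator E F {a})) = {g a} := by
  have hnonempty (a : Vred E) (ha : hgt E a = i) :
      (levelSupport E i (T (blockIndicator E F {a}))).Nonempty := by
    have ha' : {a} ⊆ {d | hgt E d = i} := Set.singleton_subset_iff.2 ha
    rw [Set.nonempty_iff_ne_empty, Ne, levelSupport_map_eq_empty_iff hh hT
      (hgt_le_of_mem_classSupport_blockIndicator ha'), levelSupport_blockIndicator ha']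
    exact Set.singleton_ne_empty a
  rcases isEmpty_or_nonempty (Vred E) with _ | _
  · exact ⟨id, fun a => isEmptyElim a, fun a => isEmptyElim a⟩
  choose! g hg using hnonempty
  have hinj : Set.InjOn g {a | hgt E a = i} := fun a ha b hb hab =>
    eq_of_mem_levelSupport_map_blockIndicator hh hT ha hb (hg a ha) (hab ▸ hg b hb)
  -- The images of the blocks are disjoint nonempty subsets of the level, as many as the level has
  -- elements, so none of them has room for a second element.
  have himage : g '' {a | hgt E a = i} = {a | hgt E a = i} :=
    Set.eq_of_subset_of_ncard_le (Set.image_subset_iff.2 fun a ha => (hg a ha).2)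
      hinj.ncard_image.ge
  refine ⟨g, hinj, fun a ha => Set.eq_singleton_iff_unique_mem.2 ⟨hg a ha, fun c hc => ?_⟩⟩
  obtain ⟨b, hb, rfl⟩ := himage.ge hc.2
  rw [eq_of_mem_levelSupport_map_blockIndicator hh hT ha hb hc (hg b hb)]

theorem levelSupport_map_blockIndicator (hh : Hierarchical E)
    (hT : ∀ z, gweight E (T z) = gweight E z) {i : ℕ} {g : Vred E → Vred E}
    (hg : ∀ a, hgt E a = i → levelSupport E i (T (blockIndicator E F {a})) = {g a})
    {S : Set (Vred E)} (hS : S ⊆ {a | hgt E a = i}) :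
    levelSupport E i (T (blockIndicator E F S)) = g '' S := by
  induction S, S.toFinite using Set.Finite.induction_on with
  | empty =>
    rw [Set.image_empty, levelSupport_map_eq_empty_iff hh hT
      (hgt_le_of_mem_classSupport_blockIndicator hS), levelSupport_blockIndicator hS]
  | @insert a S ha _ ih =>
    obtain ⟨hai, hSi⟩ := Set.insert_subset_iff.1 hS
    have hai' := Set.singleton_subset_iff.2 hai
    have hdisj := disjoint_levelSupport_map hh hT
      (hgt_le_of_mem_classSupport_blockIndicator hai')
      (hgt_le_of_mem_classSupport_blockIndicator hSi) <| by
        rw [levelSupport_blockIndicator hai', levelSupport_blockIndicator hSi]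
        exact Set.disjoint_singleton_left.2 ha
    rw [blockIndicator_insert ha, map_add, levelSupport_add_of_disjoint hdisj, hg a hai, ih hSi,
      Set.image_insert_eq, Set.insert_eq]

theorem bijOn_of_map_blockIndicator_eq (hh : Hierarchical E)
    (hT : ∀ z, gweight E (T z) = gweight E z) {i : ℕ} {S S' : Set (Vred E)}
    (hS : S ⊆ {a | hgt E a = i}) (hS' : S' ⊆ {a | hgt E a = i})
    (hTS : T (blockIndicator E F S) = blockIndicator E F S') :
    ∃ g : Vred E → Vred E, Set.BijOn g S S' ∧ ∀ a ∈ S, lwt E (g a) = lwt E a := by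
  obtain ⟨g, hinj, hg⟩ := exists_injOn_levelSupport_map_eq_singleton hh hT i
  have himage : g '' S = S' := by
    rw [← levelSupport_map_blockIndicator hh hT hg hS, hTS, levelSupport_blockIndicator hS']
  refine ⟨g, himage ▸ (hinj.mono hS).bijOn_image, fun a ha => ?_⟩
  have hai := Set.singleton_subset_iff.2 (hS ha)
  calc lwt E (g a) = blockWeight E (levelSupport E i (T (blockIndicator E F {a}))) := by
        rw [hg a (hS ha)]; rfl
    _ = lwt E a := by
        rw [blockWeight_levelSupport_map hh hT (hgt_le_of_mem_classSupport_blockIndicator hai),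
          levelSupport_blockIndicator hai]
        rfl

theorem udp_of_transitive (hh : Hierarchical E)
    (h : ∀ x y : Fin n → F, gweight E x = gweight E y →
      ∃ T : (Fin n → F) →+ (Fin n → F), (∀ z, gweight E (T z) = gweight E z) ∧ T x = y) :
    UDP E := by
  intro i S S' hS hS' hSS'
  simp only [finsum_lwt_eq_blockWeight] at hSS'
  obtain ⟨T, hT, hTS⟩ :=
    h _ _ (gweight_blockIndicator_eq_of_blockWeight_eq hh hS hS' hSS')
  exact bijOn_of_map_blockIndicator_eq hh hT hS hS' hTS

end Transitive

section Orbit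

variable {n : ℕ} {E : Fin n → Fin n → Prop} {F : Type*} [Field F]

variable (E) in
/-- Two words are in the same orbit of the group of linear `G`-isometries. -/
def SameOrbit (x y : Fin n → F) : Prop :=
  ∃ T : (Fin n → F) ≃ₗ[F] (Fin n → F), (∀ z, gweight E (T z) = gweight E z) ∧ T x = y

theorem SameOrbit.refl (x : Fin n → F) : SameOrbit E x x := ⟨.refl F _, fun _ => rfl, rfl⟩

theorem SameOrbit.symm {x y : Fin n → F} : SameOrbit E x y → SameOrbit E y x := by
  rintro ⟨T, hT, rfl⟩
  exact ⟨T.symm, fun z => by rw [← hT, T.apply_symm_apply], T.symm_apply_apply x⟩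

theorem SameOrbit.trans {x y z : Fin n → F} :
    SameOrbit E x y → SameOrbit E y z → SameOrbit E x z := by
  rintro ⟨T, hT, rfl⟩ ⟨S, hS, rfl⟩
  exact ⟨T ≪≫ₗ S, fun w => (hS (T w)).trans (hT w), rfl⟩

theorem sameOrbit_apply {T : (Fin n → F) →ₗ[F] (Fin n → F)}
    (hT : ∀ z, gweight E (T z) = gweight E z) (x : Fin n → F) : SameOrbit E x (T x) := by
  have hinj : Function.Injective T := (injective_iff_map_eq_zero T).2 fun z hz => by
    rw [← gweight_eq_zero_iff (E := E), ← hT, hz, gweight_zero]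
  exact ⟨.ofInjectiveEndo T hinj, hT, rfl⟩

theorem gweight_add_smul_le {c : Fin n} {d : Fin n → F}
    (hd : ∀ v, d v ≠ 0 → gpi E v ≤ gpi E c) (z : Fin n → F) :
    gweight E (z + z c • d) ≤ gweight E z := by
  rw [gweight_eq_blockWeight, gweight_eq_blockWeight]
  refine blockWeight_mono (lowerClosure_min ?_ (LowerSet.lower _))
  rintro _ ⟨v, hv, rfl⟩
  by_cases hzv : z v = 0
  · have hcv : z c ≠ 0 ∧ d v ≠ 0 := by simpa [hzv] using hv
    exact ⟨gpi E c, ⟨c, hcv.1, rfl⟩, hd v hcv.2⟩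
  · exact subset_lowerClosure ⟨v, hzv, rfl⟩

theorem gweight_add_smul {c : Fin n} {d : Fin n → F} (hc : d c = 0)
    (hd : ∀ v, d v ≠ 0 → gpi E v ≤ gpi E c) (z : Fin n → F) :
    gweight E (z + z c • d) = gweight E z := by
  refine (gweight_add_smul_le hd z).antisymm ?_
  have hneg : ∀ v, (-d) v ≠ 0 → gpi E v ≤ gpi E c := fun v hv => hd v (by simpa using hv)
  simpa [hc] using gweight_add_smul_le hneg (z + z c • d)

theorem sameOrbit_indicator_level (hh : Hierarchical E) {i : ℕ} {x : Fin n → F}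
    (hx : ∀ a ∈ classSupport E x, hgt E a ≤ i) (hne : (levelSupport E i x).Nonempty) :
    SameOrbit E x ((gpi E ⁻¹' {a | hgt E a = i}).indicator x) := by
  obtain ⟨_, ⟨c, hc, rfl⟩, hci⟩ := hne
  set y := (gpi E ⁻¹' {a | hgt E a = i}).indicator x with hy
  have hlevel {v : Fin n} (hv : hgt E (gpi E v) = i) : y v = x v :=
    Set.indicator_of_mem (show v ∈ gpi E ⁻¹' {a | hgt E a = i} from hv) x
  have hdc : ((x c)⁻¹ • (y - x)) c = 0 := by simp [hlevel hci]
  have hd (v : Fin n) (hv : ((x c)⁻¹ • (y - x)) v ≠ 0) : gpi E v ≤ gpi E c := by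
    have hvi : hgt E (gpi E v) ≠ i := fun hvi => hv (by simp [hlevel hvi])
    have hxv : x v ≠ 0 := fun hxv => hv (by simp [hy, Set.indicator_apply, hxv])
    exact (hh.lt_iff_hgt_lt.2 (((hx _ ⟨v, hxv, rfl⟩).lt_of_ne hvi).trans_eq hci.symm)).le
  have horbit := sameOrbit_apply
    (T := LinearMap.transvection (LinearMap.proj c) ((x c)⁻¹ • (y - x)))
    (gweight_add_smul hdc hd) x
  rwa [LinearMap.transvection.apply, LinearMap.proj_apply, smul_inv_smul₀ hc,
    add_sub_cancel] at horbit

theorem mem_classSupport_iff_funLeft_ne_zero {b : Vred E} {z : Fin n → F} :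
    b ∈ classSupport E z ↔ LinearMap.funLeft F F ((↑) : {v // gpi E v = b} → Fin n) z ≠ 0 := by
  simp [classSupport, Function.ne_iff, LinearMap.funLeft, and_comm]

theorem sameOrbit_of_classSupport_eq {x y : Fin n → F} (h : classSupport E x = classSupport E y) :
    SameOrbit E x y := by
  let r (b : Vred E) := LinearMap.funLeft F F ((↑) : {v // gpi E v = b} → Fin n)
  have hr (b : Vred E) : r b x = 0 ↔ r b y = 0 := by
    rw [← not_iff_not, ← Ne, ← mem_classSupport_iff_funLeft_ne_zero, h,
      mem_classSupport_iff_funLeft_ne_zero]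
  choose e he using fun b => exists_linearEquiv_apply_eq (K := F) (hr b)
  let T : (Fin n → F) →ₗ[F] (Fin n → F) :=
    LinearMap.pi fun v => LinearMap.proj ⟨v, rfl⟩ ∘ₗ (e (gpi E v)).toLinearMap ∘ₗ r (gpi E v)
  have hrT (b : Vred E) (z : Fin n → F) : r b (T z) = e b (r b z) := by
    ext ⟨v, rfl⟩
    rfl
  have hsupport (z : Fin n → F) : classSupport E (T z) = classSupport E z := by
    ext b
    rw [mem_classSupport_iff_funLeft_ne_zero, mem_classSupport_iff_funLeft_ne_zero]
    exact (hrT b z ▸ (e b).map_eq_zero_iff).not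
  have hTx : T x = y := funext fun v => congrFun (he (gpi E v)) ⟨v, rfl⟩
  exact hTx ▸ sameOrbit_apply (fun z => by simp only [gweight_eq_blockWeight, hsupport]) x

theorem blockWeight_image_perm {σ : Equiv.Perm (Vred E)} (hσ : ∀ a, lwt E (σ a) = lwt E a)
    (A : Set (Vred E)) : blockWeight E (σ '' A) = blockWeight E A := by
  rw [← finsum_lwt_eq_blockWeight, finsum_mem_image σ.injective.injOn]
  simp only [hσ, finsum_lwt_eq_blockWeight]

theorem blockWeight_lowerClosure_image_perm (hh : Hierarchical E) {σ : Equiv.Perm (Vred E)}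
    (hhgt : ∀ a, hgt E (σ a) = hgt E a) (hlwt : ∀ a, lwt E (σ a) = lwt E a) (A : Set (Vred E)) :
    blockWeight E (lowerClosure (σ '' A)) = blockWeight E (lowerClosure A) := by
  let φ : Vred E ≃o Vred E := ⟨σ, fun {a b} => by
    rw [le_iff_lt_or_eq, le_iff_lt_or_eq, σ.injective.eq_iff, hh.lt_iff_hgt_lt,
      hh.lt_iff_hgt_lt, hhgt, hhgt]⟩
  have hφ := congrArg (SetLike.coe (B := Vred E)) (lowerClosure_image (s := A) φ)
  rw [LowerSet.coe_map] at hφ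
  exact (congrArg (blockWeight E) hφ).trans (blockWeight_image_perm hlwt _)

theorem exists_sameOrbit_classSupport_eq_image (hh : Hierarchical E) {σ : Equiv.Perm (Vred E)}
    (hhgt : ∀ a, hgt E (σ a) = hgt E a) (hlwt : ∀ a, lwt E (σ a) = lwt E a) (x : Fin n → F) :
    ∃ y, SameOrbit E x y ∧ classSupport E y = σ '' classSupport E x := by
  obtain ⟨s, hs⟩ := exists_equiv_comp_eq_of_ncard_fiber_eq (σ ∘ gpi E) (gpi E) <|
    σ.surjective.forall.2 fun b => by simpa [lwt] using (hlwt b).symm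
  have hsupport (z : Fin n → F) : classSupport E (z ∘ s.symm) = σ '' classSupport E z := by
    rw [classSupport, Function.support_comp_eq_preimage, ← s.image_eq_preimage_symm,
      Set.image_image, classSupport, Set.image_image]
    simp only [hs, Function.comp_apply]
  refine ⟨x ∘ s.symm, ⟨LinearEquiv.funCongrLeft F F s.symm, fun z => ?_, rfl⟩, hsupport x⟩
  rw [gweight_eq_blockWeight z, ← blockWeight_lowerClosure_image_perm hh hhgt hlwt, ← hsupport]
  exact gweight_eq_blockWeight _

theorem sameOrbit_of_classSupport_subset_level (hh : Hierarchical E) (hUDP : UDP E) {i : ℕ}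
    {x y : Fin n → F} (hx : classSupport E x ⊆ {a | hgt E a = i})
    (hy : classSupport E y ⊆ {a | hgt E a = i})
    (h : blockWeight E (classSupport E x) = blockWeight E (classSupport E y)) :
    SameOrbit E x y := by
  rw [← finsum_lwt_eq_blockWeight, ← finsum_lwt_eq_blockWeight] at h
  obtain ⟨g, hg, hlwt⟩ := hUDP i _ _ hx hy h
  obtain ⟨σ, hσ, himage⟩ := exists_perm_image_eq_of_bijOn
    (f := fun a => (hgt E a, lwt E a)) hg fun a ha =>
      Prod.ext ((hy (hg.mapsTo ha)).trans (hx ha).symm) (hlwt a ha)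
  simp only [Prod.mk.injEq] at hσ
  obtain ⟨x', hxx', hx'⟩ :=
    exists_sameOrbit_classSupport_eq_image hh (fun a => (hσ a).1) (fun a => (hσ a).2) x
  exact hxx'.trans (sameOrbit_of_classSupport_eq (hx'.trans himage))

theorem sameOrbit_of_gweight_eq (hh : Hierarchical E) (hUDP : UDP E) {x y : Fin n → F}
    (h : gweight E x = gweight E y) : SameOrbit E x y := by
  rcases (classSupport E x).eq_empty_or_nonempty with hempty | hne
  · rw [classSupport, Set.image_eq_empty, Function.support_eq_empty_iff] at hempty
    rw [hempty, gweight_zero, eq_comm, gweight_eq_zero_iff] at h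
    rw [hempty, h]
    exact .refl 0
  obtain ⟨c, hc, hmax⟩ := Set.exists_max_image _ (hgt E) (Set.toFinite _) hne
  have hmax' : ∀ a ∈ classSupport E y, hgt E a ≤ hgt E c := by
    rwa [← gweight_le_blockWeight_iff hh, ← h, gweight_le_blockWeight_iff hh]
  have hlevel := blockWeight_levelSupport_eq_of_gweight_eq hh hmax hmax' h
  have hnex : (levelSupport E (hgt E c) x).Nonempty := ⟨c, hc, rfl⟩
  have hney : (levelSupport E (hgt E c) y).Nonempty := by
    rw [Set.nonempty_iff_ne_empty, Ne, ← blockWeight_eq_zero_iff, ← hlevel,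
      blockWeight_eq_zero_iff]
    exact hnex.ne_empty
  have hxy : SameOrbit E ((gpi E ⁻¹' {a | hgt E a = hgt E c}).indicator x)
      ((gpi E ⁻¹' {a | hgt E a = hgt E c}).indicator y) := by
    apply sameOrbit_of_classSupport_subset_level hh hUDP (i := hgt E c) <;>
      simp only [classSupport_indicator]
    exacts [Set.inter_subset_right, Set.inter_subset_right, hlevel]
  exact (sameOrbit_indicator_level hh hmax hnex).trans
    (hxy.trans (sameOrbit_indicator_level hh hmax' hney).symm)

end Orbit

theorem stmt_15_general {n : ℕ} {F : Type*} [Field F] (E : Fin n → Fin n → Prop)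
    (hh : Hierarchical E) :
    (∀ x y : Fin n → F, gweight E x = gweight E y →
      ∃ T : (Fin n → F) →ₗ[F] (Fin n → F), Function.Bijective T ∧
        (∀ z : Fin n → F, gweight E (T z) = gweight E z) ∧ T x = y) ↔ UDP E := by
  refine ⟨fun h => udp_of_transitive (F := F) hh fun x y hxy => ?_, fun hUDP x y hxy => ?_⟩
  · obtain ⟨T, -, hT, hTx⟩ := h x y hxy
    exact ⟨T.toAddMonoidHom, hT, hTx⟩
  · obtain ⟨T, hT, hTx⟩ := sameOrbit_of_gweight_eq hh hUDP hxy
    exact ⟨T, T.bijective, hT, hTx⟩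

/-- for a graph whose reduced canonical form determines a hierarchical
poset, the group of linear `G`-isometries of `F_q^n` acts transitively on the spheres of
`(F_q^n, d_G)` iff `G` satisfies the Unique Decomposition Property. -/
theorem stmt_15 {n : ℕ} (hn : 1 ≤ n) {F : Type*} [Field F] [Fintype F]
    (E : Fin n → Fin n → Prop) (hE : Irreflexive E) (hh : Hierarchical E) :
    (∀ x y : Fin n → F, gweight E x = gweight E y →
      ∃ T : (Fin n → F) →ₗ[F] (Fin n → F), Function.Bijective T ∧
        (∀ z : Fin n → F, gweight E (T z) = gweight E z) ∧ T x = y) ↔ UDP E :=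
  stmt_15_general E hh
end
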